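/- arXiv:1907.05658 — 8 statements merged into one kernel-verified Lean document; each statement's English description precedes it below -/
import Mathlib

section
/- Let s ∈ ℕ, let λ_1, …, λ_s ∈ ℂ be pairwise distinct modulo 2πi (i.e. λ_j − λ_m ∉ 2πi·ℤ for j ≠ m), let d_1, …, d_s ∈ ℕ₀, and let π_{j,k} : ℝ → ℂ (1 ≤ j ≤ s, 0 ≤ k ≤ d_j) be 1-periodic functions. If the function f(t) = Σ_{j=1}^s e^{λ_j t} Σ_{k=0}^{d_j} π_{j,k}(t)·t^k is analytic on ℝ, then every function π_{j,k} is analytic on ℝ. -/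
theorem aux_fwd (μ : ℂ) (E : Module.End ℂ (ℕ → ℂ)) (hE : ∀ u n, E u n = u (n+1)) (K : ℕ) :
    ∀ g : ℂ → ℂ, ∀ n : ℕ, ((E - μ • (1 : Module.End ℂ (ℕ → ℂ))) ^ K) (fun n => μ ^ n * g n) n
      = μ ^ (n + K) * ((fwdDiff (1:ℂ))^[K] g) n := by
  induction K with
  | zero => intro g n; simp
  | succ K ih =>
    intro g n
    rw [pow_succ, Module.End.mul_apply, Function.iterate_succ_apply]
    have h : (E - μ • (1 : Module.End ℂ (ℕ → ℂ))) (fun n => μ ^ n * g n)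
        = μ • (fun n : ℕ => μ ^ n * ((fwdDiff (1:ℂ)) g) n) := by
      funext m
      simp only [LinearMap.sub_apply, LinearMap.smul_apply, Module.End.one_apply, Pi.sub_apply,
        Pi.smul_apply, hE, smul_eq_mul, fwdDiff]
      push_cast
      ring
    rw [h, map_smul, Pi.smul_apply, ih, smul_eq_mul]
    ring

theorem aux_indep (s : ℕ) (μ : Fin s → ℂ) (hμ : Function.Injective μ) (h0 : ∀ j, μ j ≠ 0)
    (d : Fin s → ℕ) :
    LinearIndependent ℂ (fun (p : Σ j : Fin s, Fin (d j + 1)) (n : ℕ) =>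
      μ p.1 ^ n * (n : ℂ) ^ (p.2 : ℕ)) := by
  rw [Fintype.linearIndependent_iff]
  intro a ha
  let E : Module.End ℂ (ℕ → ℂ) :=
    { toFun := fun u n => u (n+1), map_add' := fun _ _ => rfl, map_smul' := fun _ _ => rfl }
  have hE : ∀ u n, E u n = u (n+1) := fun _ _ => rfl
  have hind := (E.independent_maxGenEigenspace).comp hμ
  rw [iSupIndep_iff_finsetSum_eq_zero_imp_eq_zero] at hind
  rw [Fintype.sum_sigma] at ha
  have key := hind Finset.univ (fun j => ∑ k : Fin (d j + 1), a ⟨j, k⟩ • fun n : ℕ =>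
      μ j ^ n * (n : ℂ) ^ (k : ℕ)) (by
    intro j _
    refine Submodule.sum_mem _ fun k _ => Submodule.smul_mem _ _ ?_
    simp only [Function.comp]
    rw [Module.End.mem_maxGenEigenspace]
    refine ⟨k + 1, ?_⟩
    funext n
    have := aux_fwd (μ j) E hE (k + 1) (fun r => r ^ (k : ℕ)) n
    rw [fwdDiff_iter_pow_eq_zero_of_lt (Nat.lt_succ_self _)] at this
    simpa using this) ha
  rintro ⟨j, k⟩
  have hj := key j (Finset.mem_univ _)
  let P : Polynomial ℂ := ∑ k : Fin (d j + 1), Polynomial.monomial (k : ℕ) (a ⟨j, k⟩)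
  have hP : P = 0 := by
    apply Polynomial.eq_zero_of_infinite_isRoot
    refine Set.Infinite.mono (s := Set.range (fun n : ℕ => (n : ℂ))) ?_
      (Set.infinite_range_of_injective Nat.cast_injective)
    rintro _ ⟨n, rfl⟩
    have := congrFun hj n
    simp only [Finset.sum_apply, Pi.smul_apply, smul_eq_mul, Pi.zero_apply] at this
    have h2 : μ j ^ n * P.eval (n : ℂ) = 0 := by
      rw [← this, Polynomial.eval_finsetSum, Finset.mul_sum]
      refine Finset.sum_congr rfl fun i _ => ?_
      rw [Polynomial.eval_monomial]; ring
    exact (mul_eq_zero.mp h2).resolve_left (pow_ne_zero _ (h0 j))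
  have hc : P.coeff k = a ⟨j, k⟩ := by
    simp only [P, Polynomial.finsetSum_coeff, Polynomial.coeff_monomial]
    rw [Finset.sum_eq_single k]
    · simp
    · intro b _ hb
      rw [if_neg]
      exact fun h => hb (Fin.ext h)
    · simp
  rw [← hc, hP, Polynomial.coeff_zero]

theorem aux_dual (s : ℕ) (μ : Fin s → ℂ) (hμ : Function.Injective μ) (h0 : ∀ j, μ j ≠ 0)
    (d : Fin s → ℕ) (j₀ : Fin s) (k₀ : ℕ) (hk : k₀ ≤ d j₀) :
    ∃ c : ℕ →₀ ℂ, ∀ j, ∀ k ≤ d j, ∑ n ∈ c.support, c n * (μ j ^ n * (n : ℂ) ^ k)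
      = if j = j₀ ∧ k = k₀ then 1 else 0 := by
  have h := span_flip_eq_top_iff_linearIndependent.mpr (aux_indep s μ hμ h0 d)
  have hm : Pi.single (⟨j₀, ⟨k₀, Nat.lt_succ_of_le hk⟩⟩ : Σ j : Fin s, Fin (d j + 1)) (1:ℂ) ∈
    Submodule.span ℂ (Set.range <| flip (fun (p : Σ j : Fin s, Fin (d j + 1)) (n : ℕ) =>
      μ p.1 ^ n * (n : ℂ) ^ (p.2 : ℕ))) := h ▸ Submodule.mem_top
  rw [Finsupp.mem_span_range_iff_exists_finsupp] at hm
  obtain ⟨c, hc⟩ := hm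
  refine ⟨c, fun j k hk' => ?_⟩
  have := congrFun hc ⟨j, ⟨k, Nat.lt_succ_of_le hk'⟩⟩
  rw [Finsupp.sum, Finset.sum_apply] at this
  simp only [Pi.smul_apply, flip, smul_eq_mul] at this
  rw [this, Pi.single_apply]
  refine if_congr ?_ rfl rfl
  constructor
  · intro h
    have h1 := congrArg Sigma.fst h
    have h2 := congrArg (fun p : Σ j : Fin s, Fin (d j + 1) => (p.2 : ℕ)) h
    exact ⟨h1, h2⟩
  · rintro ⟨rfl, rfl⟩; rfl

/-- If `f(t) = Σ_{j=1}^s e^{λ_j t} Σ_{k=0}^{d_j} π_{j,k}(t)·t^k` is analytic on ℝ,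
where the `λ_j` are pairwise distinct modulo `2πi` and the `π_{j,k}` are 1-periodic, then every
`π_{j,k}` is analytic on ℝ. -/
theorem stmt_2 (s : ℕ) (lam : Fin s → ℂ)
    (hlam : ∀ j m : Fin s, j ≠ m → ∀ n : ℤ, lam j - lam m ≠ 2 * Real.pi * Complex.I * n)
    (d : Fin s → ℕ) (π : Fin s → ℕ → ℝ → ℂ)
    (hper : ∀ j : Fin s, ∀ k ≤ d j, ∀ t : ℝ, π j k (t + 1) = π j k t)
    (f : ℝ → ℂ)
    (hfdef : ∀ t : ℝ, f t = ∑ j : Fin s, Complex.exp (lam j * (t : ℂ)) *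
        ∑ k ∈ Finset.range (d j + 1), π j k t * (t : ℂ) ^ k)
    (hf : ∀ x : ℝ, AnalyticAt ℝ f x) :
    ∀ j : Fin s, ∀ k ≤ d j, ∀ x : ℝ, AnalyticAt ℝ (π j k) x := by
  classical
  let μ : Fin s → ℂ := fun j => Complex.exp (lam j)
  have hμ : Function.Injective μ := by
    intro j m h
    by_contra hne
    obtain ⟨n, hn⟩ := Complex.exp_eq_exp_iff_exists_int.mp h
    apply hlam j m hne n
    rw [hn]; ring
  have h0 : ∀ j, μ j ≠ 0 := fun j => Complex.exp_ne_zero _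
  have hpern : ∀ j : Fin s, ∀ k ≤ d j, ∀ n : ℕ, ∀ t : ℝ, π j k (t + n) = π j k t := by
    intro j k hk n
    induction n with
    | zero => intro t; simp
    | succ n ih => intro t; rw [Nat.cast_succ, ← add_assoc, hper j k hk, ih]
  have hshift : ∀ (n : ℕ) (t : ℝ), f (t + n) = ∑ j : Fin s, ∑ k ∈ Finset.range (d j + 1),
      Complex.exp (lam j * t) * π j k t * (μ j ^ n * ((n : ℂ) + t) ^ k) := by
    intro n t
    rw [hfdef]
    refine Finset.sum_congr rfl fun j _ => ?_
    rw [Finset.mul_sum]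
    refine Finset.sum_congr rfl fun k hk => ?_
    rw [hpern j k (Nat.lt_succ_iff.mp (Finset.mem_range.mp hk))]
    have : Complex.exp (lam j * ((t + n : ℝ) : ℂ)) = Complex.exp (lam j * t) * μ j ^ n := by
      rw [← Complex.exp_nat_mul, ← Complex.exp_add]
      congr 1; push_cast; ring
    rw [this]; push_cast; ring
  have hG : ∀ j₀ : Fin s, ∀ k₀ ≤ d j₀, ∀ x : ℝ, AnalyticAt ℝ (fun t : ℝ =>
      Complex.exp (lam j₀ * t) * ∑ k ∈ Finset.range (d j₀ + 1),
        π j₀ k t * ((t : ℂ) ^ (k - k₀) * (k.choose k₀ : ℂ))) x := by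
    intro j₀ k₀ hk₀ x
    obtain ⟨c, hc⟩ := aux_dual s μ hμ h0 d j₀ k₀ hk₀
    have hbin : ∀ (t : ℝ) (j : Fin s), ∀ k ≤ d j,
        ∑ n ∈ c.support, c n * (μ j ^ n * ((n : ℂ) + t) ^ k)
          = if j = j₀ then (t : ℂ) ^ (k - k₀) * (k.choose k₀ : ℂ) else 0 := by
      intro t j k hk
      have : ∀ n ∈ c.support, c n * (μ j ^ n * ((n : ℂ) + t) ^ k)
          = ∑ i ∈ Finset.range (k + 1), (c n * (μ j ^ n * (n : ℂ) ^ i)) *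
            ((t : ℂ) ^ (k - i) * (k.choose i : ℂ)) := by
        intro n _
        rw [add_pow, Finset.mul_sum, Finset.mul_sum]
        refine Finset.sum_congr rfl fun i _ => by ring
      rw [Finset.sum_congr rfl this, Finset.sum_comm]
      have h2 : ∀ i ∈ Finset.range (k + 1), ∑ n ∈ c.support, (c n * (μ j ^ n * (n : ℂ) ^ i)) *
            ((t : ℂ) ^ (k - i) * (k.choose i : ℂ)) = if i = k₀ then
              (if j = j₀ then (t : ℂ) ^ (k - k₀) * (k.choose k₀ : ℂ) else 0) else 0 := by
        intro i hi
        rw [← Finset.sum_mul, hc j i ((Nat.lt_succ_iff.mp (Finset.mem_range.mp hi)).trans hk)]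
        by_cases h1 : i = k₀
        · subst h1; by_cases h3 : j = j₀ <;> simp [h3]
        · simp [h1]
      rw [Finset.sum_congr rfl h2, Finset.sum_ite_eq']
      split_ifs with h3 h4 h5
      · rfl
      · rfl
      · rw [Nat.choose_eq_zero_of_lt (by simpa using h3)]; simp
      · rfl
    have heq : (fun t : ℝ => Complex.exp (lam j₀ * t) * ∑ k ∈ Finset.range (d j₀ + 1),
        π j₀ k t * ((t : ℂ) ^ (k - k₀) * (k.choose k₀ : ℂ)))
        = fun t : ℝ => ∑ n ∈ c.support, c n * f (t + n) := by
      funext t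
      simp only [hshift, Finset.mul_sum]
      rw [Finset.sum_comm, Finset.sum_eq_single j₀]
      · rw [Finset.sum_comm]
        refine Finset.sum_congr rfl fun k hk => ?_
        have := hbin t j₀ k (Nat.lt_succ_iff.mp (Finset.mem_range.mp hk))
        rw [if_pos rfl] at this
        rw [← this, Finset.mul_sum, Finset.mul_sum]
        refine Finset.sum_congr rfl fun n _ => by ring
      · intro j _ hj
        rw [Finset.sum_comm]
        refine Finset.sum_eq_zero fun k hk => ?_
        have := hbin t j k (Nat.lt_succ_iff.mp (Finset.mem_range.mp hk))
        rw [if_neg hj] at this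
        rw [← mul_zero (Complex.exp (lam j * t) * π j k t), ← this, Finset.mul_sum]
        refine Finset.sum_congr rfl fun n _ => by ring
      · simp
    rw [heq]
    refine Finset.analyticAt_fun_sum _ fun n _ => ?_
    refine analyticAt_const.mul ?_
    exact (hf (x + n)).fun_comp (f := fun t : ℝ => t + n) (analyticAt_id.add analyticAt_const)
  have hof : ∀ x : ℝ, AnalyticAt ℝ (fun t : ℝ => (t : ℂ)) x := fun x =>
    Complex.ofRealCLM.analyticAt x
  have hexp : ∀ (l : ℂ) (x : ℝ), AnalyticAt ℝ (fun t : ℝ => Complex.exp (l * t)) x := by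
    intro l x
    have h1 : AnalyticAt ℝ Complex.exp (l * x) := (analyticAt_cexp).restrictScalars
    exact h1.fun_comp (f := fun t : ℝ => l * (t : ℂ)) (analyticAt_const.mul (hof x))
  intro j
  have main : ∀ m : ℕ, ∀ k ≤ d j, d j - k = m → ∀ x : ℝ, AnalyticAt ℝ (π j k) x := by
    intro m
    induction m using Nat.strong_induction_on with
    | _ m ih =>
      intro k hk hm x
      have heq : π j k = fun t : ℝ => Complex.exp ((-lam j) * t) * (Complex.exp (lam j * t) *
          ∑ i ∈ Finset.range (d j + 1), π j i t * ((t : ℂ) ^ (i - k) * (i.choose k : ℂ)))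
          - ∑ i ∈ Finset.Ioc k (d j), π j i t * ((t : ℂ) ^ (i - k) * (i.choose k : ℂ)) := by
        funext t
        rw [← mul_assoc, ← Complex.exp_add, neg_mul, neg_add_cancel, Complex.exp_zero, one_mul,
          eq_sub_iff_add_eq]
        have hsub : insert k (Finset.Ioc k (d j)) ⊆ Finset.range (d j + 1) := by
          intro i hi
          simp only [Finset.mem_insert, Finset.mem_Ioc, Finset.mem_range] at hi ⊢
          omega
        rw [← Finset.sum_subset hsub, Finset.sum_insert (by simp)]
        · simp
        · intro i _ hi'
          rename_i hi
          simp only [Finset.mem_insert, Finset.mem_Ioc, Finset.mem_range] at hi hi'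
          rw [Nat.choose_eq_zero_of_lt (by omega)]; simp
      rw [heq]
      refine ((hexp _ x).mul (hG j k hk x)).sub ?_
      refine Finset.analyticAt_fun_sum _ fun i hi => ?_
      rw [Finset.mem_Ioc] at hi
      exact (ih (d j - i) (by omega) i hi.2 rfl x).mul (((hof x).pow _).mul analyticAt_const)
  exact fun k hk x => main _ k hk rfl x
end

section
/- Let s ∈ ℕ, let λ_1, …, λ_s ∈ ℂ be pairwise distinct modulo 2πi, let d_1, …, d_s ∈ ℕ₀, and let π_{j,k} : ℝ → ℂ (1 ≤ j ≤ s, 0 ≤ k ≤ d_j) be 1-periodic functions such that f(t) = Σ_{j=1}^s e^{λ_j t} Σ_{k=0}^{d_j} π_{j,k}(t)·t^k is analytic on ℝ. Then for each j ∈ {1, …, s} there exist polynomials p_{j,0}, …, p_{j,d_j} with deg(p_{j,k}) = k such that the (analytic) function g_j(t) = e^{λ_j t} Σ_{k=0}^{d_j} p_{j,k}(t)·π_{j,k}(t) is a finite ℂ-linear combination of the integer shifts f(·+m), m ∈ ℤ, of f. -/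
lemma aux_C_mul_le (a : ℂ) (p : Polynomial ℂ) : (Polynomial.C a * p).degree ≤ p.degree := by
  by_cases ha : a = 0
  · subst ha; simp
  · exact (Polynomial.degree_C_mul ha).le

open Polynomial in
lemma aux_deg (p : ℂ[X]) (a : ℂ) (m : ℕ) (h : p.degree < (m : WithBot ℕ)) :
    (C a * taylor 1 p - C a * p).degree < ((m - 1 : ℕ) : WithBot ℕ) := by
  rw [← mul_sub]
  by_cases hp : p = 0
  · subst hp; simp
  refine lt_of_le_of_lt (aux_C_mul_le a _) ?_
  have h1 : (taylor 1 p - p).degree < p.degree := by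
    have := degree_sub_lt_left (p := taylor 1 p) (q := p) (degree_taylor _ _)
      (by simpa using hp) (leadingCoeff_taylor _ _)
    rwa [degree_taylor] at this
  refine lt_of_lt_of_le h1 ?_
  rw [degree_eq_natDegree hp] at h ⊢
  norm_cast at h ⊢
  omega

open Polynomial in
lemma aux_deg_le (p : ℂ[X]) (a b : ℂ) (m : WithBot ℕ) (h : p.degree < m) :
    (C a * taylor 1 p - C b * p).degree < m := by
  refine lt_of_le_of_lt (degree_sub_le _ _) (max_lt ?_ ?_)
  · refine lt_of_le_of_lt (aux_C_mul_le a _) ?_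
    rwa [degree_taylor]
  · exact lt_of_le_of_lt (aux_C_mul_le b _) h

open Polynomial in
lemma aux_deg_eq (p : ℂ[X]) (a b : ℂ) (hab : a ≠ b) :
    (C a * taylor 1 p - C b * p).degree = p.degree := by
  by_cases hp : p = 0
  · subst hp; simp
  have e : C a * taylor 1 p - C b * p = C (a - b) * p + C a * (taylor 1 p - p) := by
    rw [C_sub]; ring
  have h1 : (taylor 1 p - p).degree < p.degree := by
    have := degree_sub_lt_left (p := taylor 1 p) (q := p) (degree_taylor _ _)
      (by simpa using hp) (leadingCoeff_taylor _ _)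
    rwa [degree_taylor] at this
  have h2 : (C (a - b) * p).degree = p.degree := degree_C_mul (sub_ne_zero.2 hab)
  rw [e, degree_add_eq_left_of_degree_lt, h2]
  rw [h2]
  exact lt_of_le_of_lt (aux_C_mul_le a _) h1

/-- the exponential polynomial with polynomial coefficients `P` -/
noncomputable def auxF {s : ℕ} (lam : Fin s → ℂ) (d : Fin s → ℕ) (π : Fin s → ℕ → ℝ → ℂ)
    (P : Fin s → ℕ → Polynomial ℂ) : ℝ → ℂ := fun t =>
  ∑ j : Fin s, Complex.exp (lam j * (t : ℂ)) *
        ∑ k ∈ Finset.range (d j + 1), (P j k).eval (t : ℂ) * π j k t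

/-- the shift operator minus `a` -/
noncomputable def auxT {s : ℕ} (lam : Fin s → ℂ) (a : ℂ)
    (P : Fin s → ℕ → Polynomial ℂ) : Fin s → ℕ → Polynomial ℂ := fun j k =>
  Polynomial.C (Complex.exp (lam j)) * Polynomial.taylor 1 (P j k) - Polynomial.C a * P j k

lemma auxF_T {s : ℕ} (lam : Fin s → ℂ) (d : Fin s → ℕ) (π : Fin s → ℕ → ℝ → ℂ)
    (hper : ∀ j : Fin s, ∀ k ≤ d j, ∀ t : ℝ, π j k (t + 1) = π j k t)
    (a : ℂ) (P : Fin s → ℕ → Polynomial ℂ) (t : ℝ) :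
    auxF lam d π (auxT lam a P) t = auxF lam d π P (t + 1) - a * auxF lam d π P t := by
  unfold auxF auxT
  rw [Finset.mul_sum, ← Finset.sum_sub_distrib]
  refine Finset.sum_congr rfl fun j _ => ?_
  rw [Finset.mul_sum, Finset.mul_sum, Finset.mul_sum, Finset.mul_sum, ← Finset.sum_sub_distrib]
  refine Finset.sum_congr rfl fun k hk => ?_
  rw [hper j k (by simpa [Nat.lt_succ_iff] using hk)]
  have : lam j * ((t + 1 : ℝ) : ℂ) = lam j * t + lam j := by push_cast; ring
  rw [this, Complex.exp_add]
  simp only [Polynomial.eval_sub, Polynomial.eval_mul, Polynomial.eval_C, Polynomial.taylor_eval]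
  push_cast
  ring

/-- span of the integer shifts -/
def auxS (f : ℝ → ℂ) : Submodule ℂ (ℝ → ℂ) :=
  Submodule.span ℂ (Set.range fun m : ℤ => fun t : ℝ => f (t + m))

lemma auxS_shift (f g : ℝ → ℂ) (hg : g ∈ auxS f) : (fun t => g (t + 1)) ∈ auxS f := by
  unfold auxS at hg
  induction hg using Submodule.span_induction with
  | mem x hx =>
    obtain ⟨m, rfl⟩ := hx
    refine Submodule.subset_span ⟨m + 1, ?_⟩
    funext t
    simp only
    congr 1
    push_cast
    ring
  | zero => exact (auxS f).zero_mem
  | add x y _ _ hx hy => exact (auxS f).add_mem hx hy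
  | smul a x _ hx => exact (auxS f).smul_mem a hx

lemma auxS_T {s : ℕ} (lam : Fin s → ℂ) (d : Fin s → ℕ) (π : Fin s → ℕ → ℝ → ℂ)
    (hper : ∀ j : Fin s, ∀ k ≤ d j, ∀ t : ℝ, π j k (t + 1) = π j k t) (f : ℝ → ℂ)
    (a : ℂ) (P : Fin s → ℕ → Polynomial ℂ) (h : auxF lam d π P ∈ auxS f) :
    auxF lam d π (auxT lam a P) ∈ auxS f := by
  have : auxF lam d π (auxT lam a P) =
      (fun t => auxF lam d π P (t + 1)) - a • auxF lam d π P := by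
    funext t
    rw [auxF_T lam d π hper]
    simp
  rw [this]
  exact (auxS f).sub_mem (auxS_shift _ _ h) ((auxS f).smul_mem a h)

lemma aux_main {s : ℕ} (lam : Fin s → ℂ)
    (hne : ∀ j m : Fin s, j ≠ m → Complex.exp (lam j) ≠ Complex.exp (lam m))
    (d : Fin s → ℕ) (π : Fin s → ℕ → ℝ → ℂ)
    (hper : ∀ j : Fin s, ∀ k ≤ d j, ∀ t : ℝ, π j k (t + 1) = π j k t) (f : ℝ → ℂ)
    (h0 : auxF lam d π (fun _ k => Polynomial.X ^ k) ∈ auxS f) (j : Fin s)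
    (A : Finset (Fin s)) : j ∉ A →
    ∃ P : Fin s → ℕ → Polynomial ℂ, auxF lam d π P ∈ auxS f ∧
      (∀ k, (P j k).degree = k) ∧
      (∀ l k, (P l k).degree < ((k + 1 : ℕ) : WithBot ℕ)) ∧
      ∀ l ∈ A, ∀ k ≤ d l, P l k = 0 := by
  induction A using Finset.induction_on with
  | empty =>
    intro _
    refine ⟨_, h0, fun k => by simp, fun l k => ?_, by simp⟩
    rw [Polynomial.degree_X_pow]
    norm_cast
    omega
  | insert l A hl ih =>
    intro hj
    rw [Finset.mem_insert, not_or] at hj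
    obtain ⟨P, hP, h1, h2, h3⟩ := ih hj.2
    have key : ∀ n : ℕ, ∃ P : Fin s → ℕ → Polynomial ℂ, auxF lam d π P ∈ auxS f ∧
      (∀ k, (P j k).degree = k) ∧
      (∀ l k, (P l k).degree < ((k + 1 : ℕ) : WithBot ℕ)) ∧
      (∀ l ∈ A, ∀ k ≤ d l, P l k = 0) ∧
      ∀ k, (P l k).degree < ((k + 1 - n : ℕ) : WithBot ℕ) := by
      intro n
      induction n with
      | zero => exact ⟨P, hP, h1, h2, h3, fun k => h2 l k⟩
      | succ n ihn =>
        obtain ⟨Q, q0, q1, q2, q3, q4⟩ := ihn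
        refine ⟨auxT lam (Complex.exp (lam l)) Q, auxS_T lam d π hper f _ Q q0, ?_, ?_, ?_, ?_⟩
        · intro k
          rw [← q1 k]
          exact aux_deg_eq _ _ _ (hne _ _ hj.1)
        · intro i k
          exact aux_deg_le _ _ _ _ (q2 i k)
        · intro i hi k hk
          simp [auxT, q3 i hi k hk]
        · intro k
          exact aux_deg _ _ _ (q4 k)
    obtain ⟨Q, q0, q1, q2, q3, q4⟩ := key (d l + 1)
    refine ⟨Q, q0, q1, q2, ?_⟩
    intro i hi k hk
    rcases Finset.mem_insert.1 hi with rfl | hi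
    · have := q4 k
      have e : k + 1 - (d i + 1) = 0 := by omega
      rw [e] at this
      by_contra hq
      rw [Polynomial.degree_eq_natDegree hq] at this
      norm_cast at this
    · exact q3 i hi k hk

/-- If `f(t) = Σ_{j=1}^s e^{λ_j t} Σ_{k=0}^{d_j} π_{j,k}(t)·t^k` is analytic on ℝ,
with `λ_j` pairwise distinct modulo `2πi` and `π_{j,k}` 1-periodic, then for each `j` there
exist polynomials `p_{j,k}` with `deg p_{j,k} = k` such that
`g_j(t) = e^{λ_j t} Σ_{k=0}^{d_j} p_{j,k}(t)·π_{j,k}(t)` is a finite ℂ-linear combination of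
the integer shifts `f(·+m)`, `m ∈ ℤ`, of `f`. -/
theorem stmt_3 (s : ℕ) (lam : Fin s → ℂ)
    (hlam : ∀ j m : Fin s, j ≠ m → ∀ n : ℤ, lam j - lam m ≠ 2 * Real.pi * Complex.I * n)
    (d : Fin s → ℕ) (π : Fin s → ℕ → ℝ → ℂ)
    (hper : ∀ j : Fin s, ∀ k ≤ d j, ∀ t : ℝ, π j k (t + 1) = π j k t)
    (f : ℝ → ℂ)
    (hfdef : ∀ t : ℝ, f t = ∑ j : Fin s, Complex.exp (lam j * (t : ℂ)) *
        ∑ k ∈ Finset.range (d j + 1), π j k t * (t : ℂ) ^ k)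
    (hf : ∀ x : ℝ, AnalyticAt ℝ f x) :
    ∀ j : Fin s, ∃ p : ℕ → Polynomial ℂ, (∀ k ≤ d j, (p k).degree = k) ∧
      ∃ (S : Finset ℤ) (c : ℤ → ℂ), ∀ t : ℝ,
        Complex.exp (lam j * (t : ℂ)) *
            ∑ k ∈ Finset.range (d j + 1), (p k).eval (t : ℂ) * π j k t
          = ∑ m ∈ S, c m * f (t + m) := by
  intro j
  have hne : ∀ j m : Fin s, j ≠ m → Complex.exp (lam j) ≠ Complex.exp (lam m) := by
    intro j m hjm h
    obtain ⟨n, hn⟩ := Complex.exp_eq_exp_iff_exists_int.1 h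
    refine hlam j m hjm n ?_
    rw [hn]
    ring
  have h0 : auxF lam d π (fun _ k => Polynomial.X ^ k) ∈ auxS f := by
    refine Submodule.subset_span ⟨0, ?_⟩
    funext t
    simp only [Int.cast_zero, add_zero]
    rw [hfdef]
    simp [auxF, mul_comm]
  obtain ⟨P, p0, p1, -, p3⟩ := aux_main lam hne d π hper f h0 j (Finset.univ.erase j) (by simp)
  refine ⟨P j, fun k _ => p1 k, ?_⟩
  obtain ⟨c, hc⟩ := Finsupp.mem_span_range_iff_exists_finsupp.1 p0
  refine ⟨c.support, c, fun t => ?_⟩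
  have h := congrFun hc t
  rw [Finsupp.sum, Finset.sum_apply] at h
  simp only [Pi.smul_apply, smul_eq_mul] at h
  rw [h, auxF, Finset.sum_eq_single j]
  · intro i _ hi
    rw [Finset.sum_eq_zero, mul_zero]
    intro k hk
    rw [p3 i (by simp [hi]) k (by simpa [Nat.lt_succ_iff] using hk)]
    simp
  · simp
end

section
/- Let φ_1, …, φ_n : ℝ → ℂ be compactly supported functions and let f be an analytic function belonging to the shift-invariant space V_Φ generated by φ_1, …, φ_n. Then there exist N ∈ ℕ and coefficients a_0, …, a_N ∈ ℂ, not all zero, such that Σ_{ℓ=0}^N a_ℓ · f(t+ℓ) = 0 for all t ∈ ℝ. -/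
/-- If `f` is analytic and belongs to the shift-invariant space generated by
compactly supported functions `φ_1, …, φ_n`, then some nontrivial finite linear combination of
integer shifts of `f` vanishes identically: `Σ_{ℓ=0}^N a_ℓ·f(t+ℓ) = 0` for all `t`. -/
theorem stmt_4 (n : ℕ) (φ : Fin n → ℝ → ℂ) (hsupp : ∀ j, HasCompactSupport (φ j))
    (f : ℝ → ℂ) (hf : ∀ x : ℝ, AnalyticAt ℝ f x)
    (c : Fin n → ℤ → ℂ)
    (hmem : ∀ t : ℝ, f t = ∑' q : Fin n × ℤ, c q.1 q.2 * φ q.1 (t - (q.2 : ℝ))) :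
    ∃ (N : ℕ) (a : ℕ → ℂ), (∃ ℓ ≤ N, a ℓ ≠ 0) ∧
      ∀ t : ℝ, ∑ ℓ ∈ Finset.range (N + 1), a ℓ * f (t + ℓ) = 0 := by
  have hR : ∃ K : ℕ, ∀ j x, (K : ℝ) < |x| → φ j x = 0 := by
    have h1 : ∀ j, ∃ R : ℝ, ∀ x, R < |x| → φ j x = 0 := by
      intro j
      obtain ⟨R, hR⟩ := (hsupp j).isCompact.isBounded.exists_norm_le
      refine ⟨R, fun x hx => ?_⟩
      by_contra h
      have := hR x (subset_tsupport _ h)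
      rw [Real.norm_eq_abs] at this
      linarith
    choose R hR using h1
    obtain ⟨K, hK⟩ := exists_nat_gt (∑ j, |R j|)
    refine ⟨K, fun j x hx => hR j x ?_⟩
    have := Finset.single_le_sum (f := fun j => |R j|) (fun i _ => abs_nonneg _)
      (Finset.mem_univ j)
    have := le_abs_self (R j)
    linarith
  obtain ⟨K, hK⟩ := hR
  let S : Finset (Fin n × ℤ) := Finset.univ ×ˢ Finset.Icc (-(K:ℤ) - 1) K
  have key : ∀ t : ℝ, 0 < t → t < 1 → ∀ l : ℕ,
      f (t + l) = ∑ q ∈ S, c q.1 (l - q.2) * φ q.1 (t + q.2) := by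
    intro t h0 h1 l
    have e : ∀ m : ℤ, t + (l:ℝ) - ((l:ℝ) - (m:ℝ)) = t + m := fun m => by ring
    rw [hmem, ← ((Equiv.refl (Fin n)).prodCongr (Equiv.subLeft (l:ℤ))).tsum_eq]
    rw [tsum_eq_sum (s := S)]
    · refine Finset.sum_congr rfl fun q _ => ?_
      simp [e]
    · rintro ⟨j, m⟩ hq
      have hz : φ j (t + m) = 0 := by
        apply hK
        have hq' : ¬ (-(K:ℤ) - 1 ≤ m ∧ m ≤ K) := by simpa [S] using hq
        by_cases hm : m ≤ K
        · have : m + 1 ≤ -(K:ℤ) - 1 := by omega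
          have : (m:ℝ) + 1 ≤ -(K:ℝ) - 1 := by exact_mod_cast this
          rw [lt_abs]; right; linarith
        · have : (K:ℤ) + 1 ≤ m := by omega
          have : (K:ℝ) + 1 ≤ m := by exact_mod_cast this
          rw [lt_abs]; left; linarith
      simp [e, hz]
  let N := Fintype.card S
  let v : Fin (N + 1) → (S → ℂ) := fun l q => c q.1.1 ((l:ℕ) - q.1.2)
  have hv : ¬ LinearIndependent ℂ v := by
    intro h
    have := h.fintype_card_le_finrank
    simp [N] at this
  obtain ⟨g, hg, i, hi⟩ := Fintype.not_linearIndependent_iff.1 hv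
  let a : ℕ → ℂ := fun l => if h : l < N + 1 then g ⟨l, h⟩ else 0
  have ha : ∀ l : Fin (N + 1), a l = g l := fun l => dif_pos l.2
  refine ⟨N, a, ⟨i, by omega, by rw [ha]; exact hi⟩, ?_⟩
  have hz : ∀ t : ℝ, 0 < t → t < 1 → ∑ l ∈ Finset.range (N + 1), a l * f (t + l) = 0 := by
    intro t h0 h1
    rw [Finset.sum_range]
    have : ∀ l : Fin (N+1), a l * f (t + (l:ℕ)) =
        ∑ q : S, (g l * v l q) * φ q.1.1 (t + q.1.2) := by
      intro l
      rw [key t h0 h1, ← Finset.sum_coe_sort S, Finset.mul_sum]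
      refine Finset.sum_congr rfl fun q _ => ?_
      simp [ha, v, mul_assoc]
    rw [Finset.sum_congr rfl fun l _ => this l, Finset.sum_comm]
    refine Finset.sum_eq_zero fun q _ => ?_
    rw [← Finset.sum_mul]
    have := congrFun hg q
    simp only [Finset.sum_apply, Pi.smul_apply, smul_eq_mul, Pi.zero_apply] at this
    rw [this, zero_mul]
  have han : AnalyticOnNhd ℝ (fun t : ℝ => ∑ l ∈ Finset.range (N + 1), a l * f (t + l))
      Set.univ := by
    intro t _
    refine Finset.analyticAt_fun_sum _ fun l _ => analyticAt_const.mul ?_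
    exact (hf (t + l)).fun_comp (f := fun t : ℝ => t + (l:ℝ)) (analyticAt_id.add analyticAt_const)
  have := han.eq_of_eventuallyEq (g := fun _ => 0) (z₀ := (1/2 : ℝ)) (fun _ _ => analyticAt_const) (by
    filter_upwards [Ioo_mem_nhds (show (0:ℝ) < 1/2 by norm_num) (show (1/2:ℝ) < 1 by norm_num)]
      with t ht
    exact hz t ht.1 ht.2)
  exact fun t => congrFun this t
end

section
/- Let f : ℝ → ℂ be analytic and suppose there exist N ∈ ℕ, N ≥ 1, and coefficients a_0, …, a_N ∈ ℂ with a_0 ≠ 0 and a_N ≠ 0 such that Σ_{ℓ=0}^N a_ℓ · f(t+ℓ) = 0 for all t ∈ ℝ. Then there exist s ∈ ℕ, complex numbers λ_1, …, λ_s pairwise distinct modulo 2πi, integers d_1, …, d_s ∈ ℕ₀ with Σ_{j=1}^s (d_j+1) ≤ N, and 1-periodic analytic functions π_{j,k} : ℝ → ℂ (0 ≤ k ≤ d_j) such that f(t) = Σ_{j=1}^s e^{λ_j t} Σ_{k=0}^{d_j} π_{j,k}(t)·t^k for all t ∈ ℝ. -/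
namespace Stmt5

/-- analytic functions -/
def A : Submodule ℂ (ℝ → ℂ) where
  carrier := {f | ∀ x : ℝ, AnalyticAt ℝ f x}
  add_mem' := fun hf hg x => (hf x).add (hg x)
  zero_mem' := fun _ => analyticAt_const
  smul_mem' := fun c _ hf x => analyticAt_const.smul (hf x)

/-- shift -/
def T : A →ₗ[ℂ] A where
  toFun f := ⟨fun t => f.1 (t + 1), fun x =>
    AnalyticAt.fun_comp (f.2 (x + 1)) (analyticAt_id.add analyticAt_const)⟩
  map_add' _ _ := rfl
  map_smul' _ _ := rfl

lemma T_apply (f : A) (t : ℝ) : (T f).1 t = f.1 (t + 1) := rfl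

lemma T_pow (f : A) (n : ℕ) : ∀ t : ℝ, ((T ^ n) f).1 t = f.1 (t + n) := by
  induction n with
  | zero => intro t; simp
  | succ n ih =>
    intro t
    rw [pow_succ', Module.End.mul_apply, T_apply, ih]
    congr 1; push_cast; ring

lemma analytic_iter (g : ℝ → ℂ) (hg : ∀ x : ℝ, AnalyticAt ℝ g x) (n : ℕ) :
    ∀ x : ℝ, AnalyticAt ℝ ((fwdDiff (1:ℝ))^[n] g) x := by
  induction n with
  | zero => exact hg
  | succ n ih =>
    intro x
    rw [Function.iterate_succ_apply']
    have h1 : AnalyticAt ℝ (fun t : ℝ => (fwdDiff (1:ℝ))^[n] g (t + 1)) x :=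
      AnalyticAt.fun_comp (ih (x + 1)) (analyticAt_id.add analyticAt_const)
    exact h1.sub (ih x)

lemma iter_periodic_mul (h : ℝ → ℂ) (hh : ∀ t, h (t + 1) = h t) (q : ℝ → ℂ) (n : ℕ) :
    (fwdDiff (1:ℝ))^[n] (fun t => h t * q t) = fun t => h t * (fwdDiff (1:ℝ))^[n] q t := by
  induction n with
  | zero => rfl
  | succ n ih =>
    rw [Function.iterate_succ_apply', ih]
    funext t
    rw [Function.iterate_succ_apply']
    simp only [fwdDiff, hh]; ring

lemma iter_pow (n : ℕ) : (fwdDiff (1:ℝ))^[n] (fun t : ℝ => (t : ℂ) ^ n) = fun _ => (n.factorial : ℂ) := by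
  have key := fwdDiff_iter_eq_factorial (R := ℝ) (n := n)
  have h2 : ∀ k : ℕ, (fwdDiff (1:ℝ))^[k] (fun t : ℝ => (t : ℂ) ^ n)
      = fun t => (((fwdDiff (1:ℝ))^[k] (fun t : ℝ => t ^ n) t : ℝ) : ℂ) := by
    intro k
    induction k with
    | zero => funext t; simp
    | succ k ih =>
      rw [Function.iterate_succ_apply', ih]
      funext t
      rw [Function.iterate_succ_apply']
      simp only [fwdDiff]; push_cast; rfl
  rw [h2]
  funext t
  have := congrFun key t
  rw [this]; simp

lemma unip (m : ℕ) : ∀ (g : ℝ → ℂ), (∀ x : ℝ, AnalyticAt ℝ g x) →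
    ((fwdDiff (1:ℝ))^[m] g = fun _ => 0) →
    ∃ P : ℕ → ℝ → ℂ, (∀ k, (∀ t : ℝ, P k (t + 1) = P k t) ∧ (∀ x : ℝ, AnalyticAt ℝ (P k) x)) ∧
      ∀ t : ℝ, g t = ∑ k ∈ Finset.range m, P k t * (t : ℂ) ^ k := by
  induction m with
  | zero =>
    intro g _ h
    refine ⟨fun _ _ => 0, fun k => ⟨fun _ => rfl, fun _ => analyticAt_const⟩, fun t => ?_⟩
    simpa using congrFun h t
  | succ m ih =>
    intro g hg h
    set u : ℝ → ℂ := fun t => (fwdDiff (1:ℝ))^[m] g t * (m.factorial : ℂ)⁻¹ with hu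
    have hper : ∀ t, u (t + 1) = u t := by
      intro t
      have := congrFun h t
      rw [Function.iterate_succ_apply'] at this
      simp only [fwdDiff, sub_eq_zero] at this
      simp only [hu]; rw [← this]
    have hua : ∀ x, AnalyticAt ℝ u x := fun x => (analytic_iter g hg m x).mul analyticAt_const
    have hpa : ∀ x, AnalyticAt ℝ (fun t : ℝ => (t : ℂ) ^ m) x := fun x =>
      (Complex.ofRealCLM.analyticAt x).pow m
    obtain ⟨P, hP, hg'⟩ := ih (g - fun t => u t * (t : ℂ) ^ m)
      (fun x => (hg x).sub ((hua x).mul (hpa x))) (by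
        have e : (fwdDiff (1:ℝ))^[m] (g - fun t => u t * (t : ℂ) ^ m)
          = (fwdDiff (1:ℝ))^[m] g - (fwdDiff (1:ℝ))^[m] (fun t => u t * (t : ℂ) ^ m) := by
          generalize (fun t => u t * (t : ℂ) ^ m) = q
          generalize hm : m = n
          clear_value u
          clear * -
          induction n with
          | zero => rfl
          | succ n ih =>
            rw [Function.iterate_succ_apply', ih, Function.iterate_succ_apply', Function.iterate_succ_apply']
            funext t; simp only [fwdDiff, Pi.sub_apply]; ring
        rw [e, iter_periodic_mul u hper, iter_pow]
        funext t
        have : (m.factorial : ℂ) ≠ 0 := by exact_mod_cast m.factorial_ne_zero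
        simp only [Pi.sub_apply, hu]
        field_simp; ring)
    refine ⟨fun k => if k = m then u else P k, fun k => ?_, fun t => ?_⟩
    · by_cases hk : k = m
      · simpa [hk] using ⟨hper, hua⟩
      · simpa [hk] using hP k
    · rw [Finset.sum_range_succ]
      have := hg' t
      simp only [Pi.sub_apply, sub_eq_iff_eq_add] at this
      rw [this]
      congr 1
      · refine Finset.sum_congr rfl fun k hk => ?_
        simp only [if_neg (Finset.mem_range.1 hk).ne]
      · simp

lemma primary (l : ℂ) (m : ℕ) (f : A)
    (h : Polynomial.aeval T ((Polynomial.X - Polynomial.C (Complex.exp l)) ^ m) f = 0) :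
    ∃ P : ℕ → ℝ → ℂ, (∀ k, (∀ t : ℝ, P k (t + 1) = P k t) ∧ (∀ x : ℝ, AnalyticAt ℝ (P k) x)) ∧
      ∀ t : ℝ, f.1 t = Complex.exp (l * t) * ∑ k ∈ Finset.range m, P k t * (t : ℂ) ^ k := by
  have ea : ∀ x : ℝ, AnalyticAt ℝ (fun t : ℝ => Complex.exp (-(l * t))) x := fun x =>
    AnalyticAt.fun_comp (g := Complex.exp) (f := fun t : ℝ => -(l * (t : ℂ)))
      (analyticAt_cexp.restrictScalars (𝕜 := ℝ))
      ((analyticAt_const.mul (Complex.ofRealCLM.analyticAt x)).neg)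
  have key : ∀ n : ℕ, ∀ t : ℝ, Complex.exp (-(l * t)) *
      (Polynomial.aeval T ((Polynomial.X - Polynomial.C (Complex.exp l)) ^ n) f).1 t
      = Complex.exp l ^ n * (fwdDiff (1:ℝ))^[n] (fun t => Complex.exp (-(l * t)) * f.1 t) t := by
    intro n
    induction n with
    | zero => intro t; simp
    | succ n ih =>
      intro t
      rw [pow_succ', map_mul, Module.End.mul_apply, Function.iterate_succ_apply']
      generalize Polynomial.aeval T ((Polynomial.X - Polynomial.C (Complex.exp l)) ^ n) f = v at *
      have e1 : (Polynomial.aeval T (Polynomial.X - Polynomial.C (Complex.exp l)) v).1 t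
          = v.1 (t + 1) - Complex.exp l * v.1 t := by
        simp [Polynomial.aeval_C, Module.algebraMap_end_apply, T_apply]
      rw [e1]
      simp only [fwdDiff]
      have h1 := ih t
      have h2 := ih (t + 1)
      have e2 : Complex.exp (-(l * t)) = Complex.exp l * Complex.exp (-(l * ((t + 1 : ℝ) : ℂ))) := by
        rw [← Complex.exp_add]; congr 1; push_cast; ring
      rw [pow_succ, mul_sub, mul_sub]
      linear_combination (Complex.exp l) * h2 - Complex.exp l * h1 + v.1 (t + 1) * e2
  obtain ⟨P, hP, hg⟩ := unip m (fun t => Complex.exp (-(l * t)) * f.1 t)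
    (fun x => (ea x).mul (f.2 x)) (by
      funext t
      have := key m t
      rw [h] at this
      simpa [Complex.exp_ne_zero] using this.symm)
  refine ⟨P, hP, fun t => ?_⟩
  rw [← hg t, ← mul_assoc, ← Complex.exp_add]; simp

open Polynomial in
lemma decomp (S : Finset ℂ) (m : ℂ → ℕ) : ∀ f : A,
    aeval T (∏ μ ∈ S, (X - C μ) ^ m μ) f = 0 →
    ∃ g : ℂ → A, (∀ μ ∈ S, aeval T ((X - C μ) ^ m μ) (g μ) = 0) ∧ f = ∑ μ ∈ S, g μ := by
  classical
  induction S using Finset.induction_on with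
  | empty => intro f h; exact ⟨fun _ => 0, by simp, by simpa using h⟩
  | insert b S hb ih =>
    intro f h
    rw [Finset.prod_insert hb] at h
    have hc : IsCoprime ((X - C b) ^ m b) (∏ μ ∈ S, (X - C μ) ^ m μ) := by
      refine IsCoprime.prod_right fun μ hμ => IsCoprime.pow ?_
      exact isCoprime_X_sub_C_of_isUnit_sub
        (sub_ne_zero.2 (by rintro rfl; exact hb hμ)).isUnit
    have hk : f ∈ LinearMap.ker (aeval T ((X - C b) ^ m b * ∏ μ ∈ S, (X - C μ) ^ m μ)) := h
    rw [← sup_ker_aeval_eq_ker_aeval_mul_of_coprime T hc, Submodule.mem_sup] at hk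
    obtain ⟨y, hy, z, hz, rfl⟩ := hk
    obtain ⟨g, hg, rfl⟩ := ih z hz
    refine ⟨fun μ => if μ = b then y else g μ, fun μ hμ => ?_, ?_⟩
    · by_cases hm : μ = b
      · subst hm; simpa using hy
      · simpa [hm] using hg μ (Finset.mem_of_mem_insert_of_ne hμ hm)
    · rw [Finset.sum_insert hb]
      simp only [if_true]
      congr 1
      refine Finset.sum_congr rfl fun k hk => ?_
      rw [if_neg (by rintro rfl; exact hb hk)]

end Stmt5

/-- If an analytic `f : ℝ → ℂ` satisfies a nontrivial linear difference equation
`Σ_{ℓ=0}^N a_ℓ·f(t+ℓ) = 0` with `a_0 ≠ 0`, `a_N ≠ 0`, then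
`f(t) = Σ_{j=1}^s e^{λ_j t} Σ_{k=0}^{d_j} π_{j,k}(t)·t^k` with `λ_j` pairwise distinct modulo
`2πi`, `Σ_j (d_j+1) ≤ N`, and 1-periodic analytic functions `π_{j,k}`. -/
theorem stmt_5 (f : ℝ → ℂ) (hf : ∀ x : ℝ, AnalyticAt ℝ f x)
    (N : ℕ) (hN : 1 ≤ N) (a : ℕ → ℂ) (ha0 : a 0 ≠ 0) (haN : a N ≠ 0)
    (heq : ∀ t : ℝ, ∑ ℓ ∈ Finset.range (N + 1), a ℓ * f (t + ℓ) = 0) :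
    ∃ (s : ℕ) (lam : Fin s → ℂ) (d : Fin s → ℕ) (π : Fin s → ℕ → ℝ → ℂ),
      (∀ j m : Fin s, j ≠ m → ∀ k : ℤ, lam j - lam m ≠ 2 * Real.pi * Complex.I * k) ∧
      (∑ j : Fin s, (d j + 1)) ≤ N ∧
      (∀ j : Fin s, ∀ k ≤ d j,
        (∀ t : ℝ, π j k (t + 1) = π j k t) ∧ (∀ x : ℝ, AnalyticAt ℝ (π j k) x)) ∧
      ∀ t : ℝ, f t = ∑ j : Fin s, Complex.exp (lam j * (t : ℂ)) *
        ∑ k ∈ Finset.range (d j + 1), π j k t * (t : ℂ) ^ k := by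
  classical
  open Polynomial in
  obtain ⟨p, hp⟩ : ∃ p : ℂ[X], p = ∑ ℓ ∈ Finset.range (N + 1), C (a ℓ) * X ^ ℓ := ⟨_, rfl⟩
  have hcoeff : ∀ n, p.coeff n = if n < N + 1 then a n else 0 := by
    intro n; rw [hp]; simp [Polynomial.finset_sum_coeff, Polynomial.coeff_C_mul, Polynomial.coeff_X_pow]
  have hdeg : p.natDegree ≤ N := by
    rw [Polynomial.natDegree_le_iff_coeff_eq_zero]
    intro n hn
    rw [hcoeff, if_neg (by omega)]
  have hp0 : p ≠ 0 := by
    intro h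
    have := hcoeff 0
    rw [h] at this
    simp at this
    exact ha0 this.symm
  let F : Stmt5.A := ⟨f, hf⟩
  have hF : Polynomial.aeval Stmt5.T p F = 0 := by
    apply Subtype.ext
    funext t
    rw [hp, map_sum, LinearMap.sum_apply]
    rw [Submodule.coe_sum, Finset.sum_apply]
    refine Eq.trans (Finset.sum_congr rfl fun ℓ _ => ?_) (heq t)
    rw [map_mul, map_pow, Polynomial.aeval_X, Polynomial.aeval_C, Module.End.mul_apply,
      Module.algebraMap_end_apply]
    change a ℓ * ((Stmt5.T ^ ℓ) F).1 t = _
    rw [Stmt5.T_pow]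
  have hfac : p = Polynomial.C p.leadingCoeff *
      ∏ μ ∈ p.roots.toFinset, (Polynomial.X - Polynomial.C μ) ^ p.roots.count μ := by
    conv_lhs => rw [(IsAlgClosed.splits p).eq_prod_roots]
    rw [Finset.prod_multiset_map_count]
  have hF2 : Polynomial.aeval Stmt5.T
      (∏ μ ∈ p.roots.toFinset, (Polynomial.X - Polynomial.C μ) ^ p.roots.count μ) F = 0 := by
    rw [hfac, map_mul, Module.End.mul_apply, Polynomial.aeval_C, Module.algebraMap_end_apply] at hF
    exact (smul_eq_zero.1 hF).resolve_left (Polynomial.leadingCoeff_ne_zero.2 hp0)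
  obtain ⟨g, hg, hsum⟩ := Stmt5.decomp _ _ F hF2
  have hroot0 : ∀ μ ∈ p.roots.toFinset, μ ≠ 0 := by
    rintro μ hμ rfl
    rw [Multiset.mem_toFinset, Polynomial.mem_roots hp0, Polynomial.IsRoot.def,
      ← Polynomial.coeff_zero_eq_eval_zero, hcoeff] at hμ
    simp at hμ; exact ha0 hμ
  have hex : ∀ μ : p.roots.toFinset, ∃ P : ℕ → ℝ → ℂ,
      (∀ k, (∀ t : ℝ, P k (t + 1) = P k t) ∧ (∀ x : ℝ, AnalyticAt ℝ (P k) x)) ∧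
      ∀ t : ℝ, (g μ.1).1 t = Complex.exp (Complex.log μ.1 * t) *
        ∑ k ∈ Finset.range (p.roots.count μ.1), P k t * (t : ℂ) ^ k := by
    intro μ
    apply Stmt5.primary
    rw [Complex.exp_log (hroot0 μ.1 μ.2)]
    exact hg μ.1 μ.2
  choose P hP hPg using hex
  let e := p.roots.toFinset.equivFin
  have hcnt : ∀ μ : p.roots.toFinset, p.roots.count μ.1 - 1 + 1 = p.roots.count μ.1 := by
    intro μ
    have : 0 < p.roots.count μ.1 := Multiset.count_pos.2 (Multiset.mem_toFinset.1 μ.2)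
    omega
  refine ⟨p.roots.toFinset.card, fun j => Complex.log (e.symm j).1,
    fun j => p.roots.count (e.symm j).1 - 1, fun j => P (e.symm j), ?_, ?_, ?_, ?_⟩
  · intro j m hjm k hk
    apply hjm
    apply e.symm.injective
    apply Subtype.ext
    rw [← Complex.exp_log (hroot0 _ (e.symm j).2), ← Complex.exp_log (hroot0 _ (e.symm m).2),
      Complex.exp_eq_exp_iff_exists_int]
    exact ⟨k, by linear_combination hk⟩
  · simp only [hcnt]
    rw [e.symm.sum_comp (fun μ : p.roots.toFinset => p.roots.count μ.1),
      Finset.sum_coe_sort p.roots.toFinset (fun μ => p.roots.count μ), Multiset.toFinset_sum_count_eq]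
    exact (Polynomial.card_roots' p).trans hdeg
  · intro j k _
    exact hP _ k
  · intro t
    simp only [hcnt]
    simp only [← hPg]
    rw [e.symm.sum_comp (fun μ : p.roots.toFinset => (g μ.1).1 t),
      Finset.sum_coe_sort p.roots.toFinset (fun μ => (g μ).1 t)]
    have := congrFun (congrArg Subtype.val hsum) t
    rw [Submodule.coe_sum, Finset.sum_apply] at this
    exact this
end

section
/- Let φ_1, …, φ_n : ℝ → ℂ be compactly supported functions and let f be an analytic function belonging to the shift-invariant space V_Φ generated by φ_1, …, φ_n. Then there exist s ∈ ℕ, complex numbers λ_1, …, λ_s pairwise distinct modulo 2πi, integers d_1, …, d_s ∈ ℕ₀, and 1-periodic analytic functions π_{j,k} : ℝ → ℂ (1 ≤ j ≤ s, 0 ≤ k ≤ d_j) such that f(t) = Σ_{j=1}^s e^{λ_j t} Σ_{k=0}^{d_j} π_{j,k}(t)·t^k for all t ∈ ℝ. -/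
theorem aux_mul_iter (p : ℝ → ℂ) (hp : ∀ t, p (t + 1) = p t) (N : ℕ) :
    ∀ q : ℝ → ℂ, (fwdDiff (1:ℝ))^[N] (fun t => p t * q t) =
      fun t => p t * ((fwdDiff (1:ℝ))^[N] q) t := by
  induction N with
  | zero => intro q; rfl
  | succ N ih =>
    intro q
    rw [Function.iterate_succ_apply, Function.iterate_succ_apply]
    rw [← ih]
    congr 1
    funext t
    simp only [fwdDiff, hp]
    ring

theorem aux_pow_iter (N : ℕ) :
    (fwdDiff (1:ℝ))^[N] (fun t : ℝ => (t : ℂ) ^ N) = fun _ => (N.factorial : ℂ) := by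
  funext t
  have h := congrFun (fwdDiff_iter_eq_factorial (R := ℂ) (n := N)) (t : ℂ)
  rw [fwdDiff_iter_eq_sum_shift] at h ⊢
  simpa using h

theorem aux_analytic_iter (N : ℕ) : ∀ g : ℝ → ℂ, (∀ x, AnalyticAt ℝ g x) →
    ∀ x, AnalyticAt ℝ ((fwdDiff (1:ℝ))^[N] g) x := by
  induction N with
  | zero => intro g hg; exact hg
  | succ N ih =>
    intro g hg
    rw [Function.iterate_succ_apply]
    apply ih
    intro x
    have h1 : AnalyticAt ℝ (fun t : ℝ => g (t + 1)) x :=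
      (hg (x + 1)).fun_comp (f := fun t : ℝ => t + 1) (by fun_prop)
    exact h1.sub (hg x)

theorem aux_ofReal (x : ℝ) : AnalyticAt ℝ (fun t : ℝ => (t : ℂ)) x :=
  Complex.ofRealCLM.analyticAt x

theorem aux_per (N : ℕ) : ∀ g : ℝ → ℂ, (∀ x, AnalyticAt ℝ g x) →
    (fwdDiff (1:ℝ))^[N] g = 0 →
    ∃ π : ℕ → ℝ → ℂ, (∀ k, (∀ t, π k (t + 1) = π k t) ∧ ∀ x, AnalyticAt ℝ (π k) x) ∧
      ∀ t : ℝ, g t = ∑ k ∈ Finset.range N, π k t * (t : ℂ) ^ k := by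
  induction N with
  | zero =>
    intro g _ h
    refine ⟨fun _ _ => 0, fun k => ⟨fun t => rfl, fun x => analyticAt_const⟩, ?_⟩
    intro t
    simpa using congrFun h t
  | succ N ih =>
    intro g hg h
    set p : ℝ → ℂ := fun t => ((fwdDiff (1:ℝ))^[N] g) t * (N.factorial : ℂ)⁻¹ with hpdef
    have hp : ∀ t, p (t + 1) = p t := by
      intro t
      rw [Function.iterate_succ_apply'] at h
      have := congrFun h t
      simp only [fwdDiff, Pi.zero_apply, sub_eq_zero] at this
      simp only [hpdef, this]
    have hpa : ∀ x, AnalyticAt ℝ p x := fun x =>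
      (aux_analytic_iter N g hg x).mul analyticAt_const
    have hga : ∀ x, AnalyticAt ℝ (fun t : ℝ => g t - p t * (t : ℂ) ^ N) x := fun x =>
      (hg x).sub ((hpa x).mul ((aux_ofReal x).pow N))
    have hz : (fwdDiff (1:ℝ))^[N] (fun t : ℝ => g t - p t * (t : ℂ) ^ N) = 0 := by
      have e : (fun t : ℝ => g t - p t * (t : ℂ) ^ N)
          = g - fun t : ℝ => p t * (fun t : ℝ => (t : ℂ) ^ N) t := rfl
      have e2 : ∀ u v : ℝ → ℂ, (fwdDiff (1:ℝ))^[N] (u - v)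
          = (fwdDiff (1:ℝ))^[N] u - (fwdDiff (1:ℝ))^[N] v := by
        intro u v
        funext t
        simp [fwdDiff_iter_eq_sum_shift, smul_sub, Finset.sum_sub_distrib]
      rw [e, e2, aux_mul_iter p hp, aux_pow_iter]
      funext t
      have : (N.factorial : ℂ) ≠ 0 := by exact_mod_cast N.factorial_ne_zero
      simp [hpdef, this]
    obtain ⟨π, h1, h2⟩ := ih _ hga hz
    refine ⟨fun k => if k = N then p else π k, ?_, ?_⟩
    · intro k
      by_cases hk : k = N
      · simp only [hk, if_true]; exact ⟨hp, hpa⟩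
      · simp only [hk, if_false]; exact h1 k
    · intro t
      rw [Finset.sum_range_succ]
      simp only [if_true]
      rw [← sub_eq_iff_eq_add, h2 t]
      apply Finset.sum_congr rfl
      intro k hk
      rw [if_neg (Finset.mem_range.1 hk).ne]

theorem aux_twist (W : Submodule ℂ (ℝ → ℂ)) (T : Module.End ℂ W)
    (hT : ∀ (y : W) (t : ℝ), (T y : ℝ → ℂ) t = (y : ℝ → ℂ) (t + 1)) (l : ℂ) (N : ℕ) :
    ∀ y : W, ((T - Complex.exp l • (1 : Module.End ℂ W)) ^ N) y = 0 →
      (fwdDiff (1:ℝ))^[N] (fun t : ℝ => Complex.exp (-l * t) * (y : ℝ → ℂ) t) = 0 := by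
  induction N with
  | zero =>
    intro y hy
    have : y = 0 := by simpa using hy
    subst this
    funext t
    simp
  | succ N ih =>
    intro y hy
    rw [Function.iterate_succ_apply]
    have key : fwdDiff (1:ℝ) (fun t : ℝ => Complex.exp (-l * t) * (y : ℝ → ℂ) t)
        = fun t : ℝ => Complex.exp (-l * t) *
          (((Complex.exp (-l)) • ((T - Complex.exp l • (1 : Module.End ℂ W)) y) : W) : ℝ → ℂ) t := by
      funext t
      have h1 : Complex.exp (-l * ((t + 1 : ℝ) : ℂ)) = Complex.exp (-l * t) * Complex.exp (-l) := by
        rw [← Complex.exp_add]; congr 1; push_cast; ring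
      have h2 : Complex.exp (-l) * Complex.exp l = 1 := by
        rw [← Complex.exp_add]; simp
      simp only [fwdDiff, h1, LinearMap.sub_apply, LinearMap.smul_apply, Module.End.one_apply,
        Submodule.coe_smul, Submodule.coe_sub, Pi.smul_apply, Pi.sub_apply, smul_eq_mul, hT]
      linear_combination (Complex.exp (-l * t) * (y : ℝ → ℂ) t) * h2
    rw [key]
    apply ih
    rw [map_smul, ← Module.End.mul_apply, ← pow_succ, hy, smul_zero]

theorem aux_shift (n : ℕ) (φ : Fin n → ℝ → ℂ) (hsupp : ∀ j, HasCompactSupport (φ j))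
    (f : ℝ → ℂ) (c : Fin n → ℤ → ℂ)
    (hmem : ∀ t : ℝ, f t = ∑' q : Fin n × ℤ, c q.1 q.2 * φ q.1 (t - (q.2 : ℝ))) :
    ∃ s : Finset (Fin n × ℤ), ∀ m : ℕ, ∀ t ∈ Set.Ico (0:ℝ) 1,
      f (t + m) = ∑ q ∈ s, c q.1 (m - q.2) * φ q.1 (t + q.2) := by
  have hb : ∀ j, ∃ R : ℝ, ∀ t, φ j t ≠ 0 → |t| ≤ R := by
    intro j
    obtain ⟨R, hR⟩ := (hsupp j).isBounded.exists_norm_le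
    exact ⟨R, fun t ht => hR t (subset_tsupport _ ht)⟩
  choose R hR using hb
  obtain ⟨M, hM⟩ := exists_nat_ge (∑ j, |R j|)
  have hRM : ∀ j t, φ j t ≠ 0 → |t| ≤ M := fun j t ht =>
    (hR j t ht).trans ((le_abs_self _).trans ((Finset.single_le_sum (f := fun j => |R j|)
      (fun i _ => abs_nonneg _) (Finset.mem_univ j)).trans hM))
  refine ⟨Finset.univ ×ˢ Finset.Icc (-(M:ℤ)) M, ?_⟩
  intro m t ht
  rw [hmem, ← (Equiv.prodCongr (Equiv.refl (Fin n)) (Equiv.subLeft (m:ℤ))).tsum_eq]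
  rw [tsum_eq_sum (s := Finset.univ ×ˢ Finset.Icc (-(M:ℤ)) M)]
  · apply Finset.sum_congr rfl
    rintro ⟨j, k⟩ _
    simp only [Equiv.prodCongr_apply, Prod.map, Equiv.refl_apply, Equiv.subLeft_apply]
    congr 2
    push_cast; ring
  · rintro ⟨j, k⟩ hk
    simp only [Equiv.prodCongr_apply, Prod.map, Equiv.refl_apply, Equiv.subLeft_apply]
    by_contra hne
    have h := hRM _ _ (right_ne_zero_of_mul hne)
    apply hk
    push_cast at h
    rw [abs_le] at h
    simp only [Finset.mem_product, Finset.mem_univ, true_and, Finset.mem_Icc]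
    obtain ⟨h1, h2⟩ := h
    have h3 : (-(M:ℤ) : ℝ) - 1 < k := by push_cast; linarith [ht.2]
    have h4 : (k:ℝ) ≤ M := by linarith [ht.1]
    constructor
    · have : -(M:ℤ) - 1 < k := by exact_mod_cast h3
      omega
    · exact_mod_cast h4

theorem aux_W (n : ℕ) (φ : Fin n → ℝ → ℂ) (hsupp : ∀ j, HasCompactSupport (φ j))
    (f : ℝ → ℂ) (hf : ∀ x : ℝ, AnalyticAt ℝ f x)
    (c : Fin n → ℤ → ℂ)
    (hmem : ∀ t : ℝ, f t = ∑' q : Fin n × ℤ, c q.1 q.2 * φ q.1 (t - (q.2 : ℝ))) :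
    ∃ (W : Submodule ℂ (ℝ → ℂ)) (T : Module.End ℂ W), FiniteDimensional ℂ W ∧ f ∈ W ∧
      (∀ y ∈ W, ∀ x, AnalyticAt ℝ y x) ∧
      (∀ (y : W) (t : ℝ), (T y : ℝ → ℂ) t = (y : ℝ → ℂ) (t + 1)) := by
  obtain ⟨s, hs⟩ := aux_shift n φ hsupp f c hmem
  let F : ℕ → ℝ → ℂ := fun m t => f (t + m)
  let W : Submodule ℂ (ℝ → ℂ) := Submodule.span ℂ (Set.range F)
  let τ : (ℝ → ℂ) →ₗ[ℂ] (ℝ → ℂ) := LinearMap.funLeft ℂ ℂ (fun t : ℝ => t + 1)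
  let ρ : (ℝ → ℂ) →ₗ[ℂ] (Set.Ico (0:ℝ) 1 → ℂ) := LinearMap.funLeft ℂ ℂ Subtype.val
  have hτ : ∀ y ∈ W, τ y ∈ W := by
    intro y hy
    have : W ≤ W.comap τ := by
      apply Submodule.span_le.2
      rintro _ ⟨m, rfl⟩
      apply Submodule.subset_span
      refine ⟨m + 1, ?_⟩
      funext t
      simp only [F, τ, LinearMap.funLeft_apply]
      congr 1
      push_cast; ring
    exact this hy
  have han : ∀ y ∈ W, ∀ x, AnalyticAt ℝ y x := by
    intro y hy
    induction hy using Submodule.span_induction with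
    | mem y hy =>
      obtain ⟨m, rfl⟩ := hy
      intro x
      exact (hf (x + m)).fun_comp (f := fun t : ℝ => t + m) (by fun_prop)
    | zero => intro x; exact analyticAt_const
    | add u v _ _ hu hv => intro x; exact (hu x).add (hv x)
    | smul a u _ hu => intro x; exact (analyticAt_const (v := a)).mul (hu x)
  let S : Submodule ℂ (Set.Ico (0:ℝ) 1 → ℂ) := Submodule.span ℂ
    (Set.range (fun (q : s) (t : Set.Ico (0:ℝ) 1) => φ q.1.1 (t + q.1.2)))
  have hS : FiniteDimensional ℂ S := FiniteDimensional.span_of_finite ℂ (Set.finite_range _)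
  have hρ : ∀ y ∈ W, ρ y ∈ S := by
    intro y hy
    have : W ≤ S.comap ρ := by
      apply Submodule.span_le.2
      rintro _ ⟨m, rfl⟩
      have e : ρ (F m) = ∑ q : s, c q.1.1 (m - q.1.2) •
          (fun t : Set.Ico (0:ℝ) 1 => φ q.1.1 (t + q.1.2)) := by
        funext t
        rw [Finset.sum_apply]
        simp only [Pi.smul_apply, smul_eq_mul]
        rw [Finset.sum_coe_sort s (fun q => c q.1 (m - q.2) * φ q.1 (t + q.2))]
        exact hs m t t.2
      show ρ (F m) ∈ S
      rw [e]
      exact Submodule.sum_mem _ fun q _ => Submodule.smul_mem _ _ (Submodule.subset_span ⟨q, rfl⟩)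
    exact this hy
  have hinj : ∀ y ∈ W, ρ y = 0 → y = 0 := by
    intro y hy h0
    apply AnalyticOnNhd.eq_of_eventuallyEq (𝕜 := ℝ) (z₀ := (1/2 : ℝ)) (fun x _ => han y hy x)
      (fun x _ => analyticAt_const)
    have : Set.Ioo (0:ℝ) 1 ∈ nhds (1/2 : ℝ) := Ioo_mem_nhds (by norm_num) (by norm_num)
    filter_upwards [this] with t ht
    exact congrFun h0 ⟨t, ht.1.le, ht.2⟩
  refine ⟨W, τ.restrict hτ, ?_, ?_, han, ?_⟩
  · apply Module.Finite.of_injective (ρ.restrict (p := W) (q := S) hρ)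
    rw [← LinearMap.ker_eq_bot, LinearMap.ker_eq_bot']
    intro y hy
    apply Subtype.ext
    exact hinj y y.2 (congrArg Subtype.val hy)
  · apply Submodule.subset_span
    exact ⟨0, by funext t; simp [F]⟩
  · intro y t
    rfl

/-- Every analytic function `f` in the shift-invariant space generated by
compactly supported `φ_1, …, φ_n` has the form
`f(t) = Σ_{j=1}^s e^{λ_j t} Σ_{k=0}^{d_j} π_{j,k}(t)·t^k` with `λ_j` pairwise distinct modulo
`2πi` and 1-periodic analytic functions `π_{j,k}`. -/
theorem stmt_6 (n : ℕ) (φ : Fin n → ℝ → ℂ) (hsupp : ∀ j, HasCompactSupport (φ j))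
    (f : ℝ → ℂ) (hf : ∀ x : ℝ, AnalyticAt ℝ f x)
    (c : Fin n → ℤ → ℂ)
    (hmem : ∀ t : ℝ, f t = ∑' q : Fin n × ℤ, c q.1 q.2 * φ q.1 (t - (q.2 : ℝ))) :
    ∃ (s : ℕ) (lam : Fin s → ℂ) (d : Fin s → ℕ) (π : Fin s → ℕ → ℝ → ℂ),
      (∀ j m : Fin s, j ≠ m → ∀ k : ℤ, lam j - lam m ≠ 2 * Real.pi * Complex.I * k) ∧
      (∀ j : Fin s, ∀ k ≤ d j,
        (∀ t : ℝ, π j k (t + 1) = π j k t) ∧ (∀ x : ℝ, AnalyticAt ℝ (π j k) x)) ∧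
      ∀ t : ℝ, f t = ∑ j : Fin s, Complex.exp (lam j * (t : ℂ)) *
        ∑ k ∈ Finset.range (d j + 1), π j k t * (t : ℂ) ^ k := by
  obtain ⟨W, T, hfin, hfW, han, hT⟩ := aux_W n φ hsupp f hf c hmem
  have htop := Module.End.iSup_maxGenEigenspace_eq_top T
  have hmemtop : (⟨f, hfW⟩ : W) ∈ ⨆ μ : ℂ, T.maxGenEigenspace μ := by rw [htop]; trivial
  rw [Submodule.mem_iSup_iff_exists_finsupp] at hmemtop
  obtain ⟨g, hg, hsum⟩ := hmemtop
  have hTinj : Function.Injective T := by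
    intro u v huv
    apply Subtype.ext
    funext t
    have := congrFun (congrArg Subtype.val huv) (t - 1)
    simpa [hT] using this
  have hne : ∀ μ ∈ g.support, μ ≠ 0 := by
    rintro μ hμ rfl
    obtain ⟨k, hk⟩ := (Module.End.mem_maxGenEigenspace _ _ _).1 (hg 0)
    have hT0 : T - (0 : ℂ) • (1 : Module.End ℂ W) = T := by
      apply LinearMap.ext
      intro y
      simp
    rw [hT0, Module.End.pow_apply] at hk
    apply Finsupp.mem_support_iff.1 hμ
    apply hTinj.iterate k
    rw [hk, ← Module.End.pow_apply, map_zero]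
  have hcomp : ∀ μ ∈ g.support, ∃ (d : ℕ) (π : ℕ → ℝ → ℂ),
      (∀ k, (∀ t, π k (t + 1) = π k t) ∧ ∀ x, AnalyticAt ℝ (π k) x) ∧
      ∀ t : ℝ, (g μ : ℝ → ℂ) t = Complex.exp (Complex.log μ * (t : ℂ)) *
        ∑ k ∈ Finset.range (d + 1), π k t * (t : ℂ) ^ k := by
    intro μ hμ
    obtain ⟨d, hk⟩ := (Module.End.mem_maxGenEigenspace _ _ _).1 (hg μ)
    have hk' : ((T - Complex.exp (Complex.log μ) • (1 : Module.End ℂ W)) ^ (d + 1)) (g μ) = 0 := by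
      rw [Complex.exp_log (hne μ hμ), pow_succ', Module.End.mul_apply, hk, map_zero]
    have hz := aux_twist W T hT (Complex.log μ) (d + 1) (g μ) hk'
    obtain ⟨π, h1, h2⟩ := aux_per (d + 1)
      (fun t : ℝ => Complex.exp (-Complex.log μ * t) * (g μ : ℝ → ℂ) t) (fun x =>
      ((analyticAt_cexp.restrictScalars (𝕜 := ℝ)).fun_comp
        ((analyticAt_const (v := -Complex.log μ)).mul (aux_ofReal x))).mul
          (han _ (g μ).2 x)) hz
    refine ⟨d, π, h1, fun t => ?_⟩
    rw [← h2 t, ← mul_assoc, ← Complex.exp_add]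
    simp
  choose! d π h1 h2 using hcomp
  let e := g.support.equivFin
  refine ⟨g.support.card, fun j => Complex.log (e.symm j).1, fun j => d (e.symm j).1,
    fun j => π (e.symm j).1, ?_, ?_, ?_⟩
  · intro j m hjm k hk
    apply hjm
    apply e.symm.injective
    apply Subtype.ext
    have : Complex.exp (Complex.log (e.symm j).1) = Complex.exp (Complex.log (e.symm m).1) := by
      rw [Complex.exp_eq_exp_iff_exists_int]
      exact ⟨k, by linear_combination hk⟩
    rwa [Complex.exp_log (hne _ (e.symm j).2), Complex.exp_log (hne _ (e.symm m).2)] at this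
  · intro j k _
    exact h1 _ (e.symm j).2 k
  · intro t
    have h3 : f t = ∑ μ ∈ g.support, (g μ : ℝ → ℂ) t := by
      have := congrFun (congrArg Subtype.val hsum) t
      change _ = f t at this
      rw [← this, Finsupp.sum, Submodule.coe_sum, Finset.sum_apply]
    rw [h3, ← Finset.sum_coe_sort, ← e.symm.sum_comp]
    apply Finset.sum_congr rfl
    intro j _
    exact h2 _ (e.symm j).2 t
end

section
/- Let φ_1, …, φ_n : ℝ → ℂ be compactly supported functions and let H be the set of all analytic functions in the shift-invariant space V_Φ generated by φ_1, …, φ_n. Then H is a ℂ-linear subspace of the space of functions ℝ → ℂ, it is finite-dimensional, and its dimension is at most the (finite) number of pairs (j,ℓ) ∈ {1,…,n} × ℤ for which the shifted generator φ_j(·−ℓ) is not identically zero on the interval [0,1]. -/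
lemma aux_fin (n : ℕ) (φ : Fin n → ℝ → ℂ) (hsupp : ∀ j, HasCompactSupport (φ j)) (a b : ℝ) :
    ({q : Fin n × ℤ | ∃ t ∈ Set.Icc a b, φ q.1 (t - (q.2 : ℝ)) ≠ 0}).Finite := by
  have h : ∀ j, ∃ R : ℝ, ∀ x, φ j x ≠ 0 → |x| ≤ R := by
    intro j
    obtain ⟨R, hR⟩ := (hsupp j).isCompact.isBounded.exists_norm_le
    exact ⟨R, fun x hx => by simpa using hR x (subset_tsupport _ hx)⟩
  choose R hR using h
  refine (Set.finite_iUnion (fun j : Fin n =>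
    (Set.finite_Icc ⌊a - R j⌋ ⌈b + R j⌉).image (fun l : ℤ => (j, l)))).subset ?_
  rintro ⟨j, l⟩ ⟨t, ht, hne⟩
  have h1 := abs_le.1 (hR j _ hne)
  refine Set.mem_iUnion.2 ⟨j, l, ⟨?_, ?_⟩, rfl⟩
  · have := Int.floor_le (a - R j)
    have h2 : ((⌊a - R j⌋ : ℤ) : ℝ) ≤ l := by linarith [ht.1, h1.2]
    exact_mod_cast h2
  · have := Int.le_ceil (b + R j)
    have h2 : (l : ℝ) ≤ ((⌈b + R j⌉ : ℤ) : ℝ) := by linarith [ht.2, h1.1]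
    exact_mod_cast h2

lemma aux_summable (n : ℕ) (φ : Fin n → ℝ → ℂ) (hsupp : ∀ j, HasCompactSupport (φ j))
    (c : Fin n → ℤ → ℂ) (t : ℝ) :
    Summable (fun q : Fin n × ℤ => c q.1 q.2 * φ q.1 (t - (q.2 : ℝ))) := by
  apply summable_of_finite_support
  refine (aux_fin n φ hsupp t t).subset ?_
  intro q hq
  exact ⟨t, ⟨le_rfl, le_rfl⟩, right_ne_zero_of_mul hq⟩

/-- The set `H` of all analytic functions in the shift-invariant space `V_Φ`
generated by compactly supported `φ_1, …, φ_n` is a finite-dimensional ℂ-linear subspace of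
`ℝ → ℂ`, of dimension at most the (finite) number of pairs `(j,ℓ)` for which `φ_j(·−ℓ)` is not
identically zero on `[0,1]`. -/
theorem stmt_7 (n : ℕ) (φ : Fin n → ℝ → ℂ) (hsupp : ∀ j, HasCompactSupport (φ j)) :
    ({q : Fin n × ℤ | ∃ t ∈ Set.Icc (0 : ℝ) 1, φ q.1 (t - (q.2 : ℝ)) ≠ 0}).Finite ∧
    ∃ S : Submodule ℂ (ℝ → ℂ),
      (S : Set (ℝ → ℂ)) =
        {f : ℝ → ℂ | (∀ x : ℝ, AnalyticAt ℝ f x) ∧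
          ∃ c : Fin n → ℤ → ℂ, ∀ t : ℝ,
            f t = ∑' q : Fin n × ℤ, c q.1 q.2 * φ q.1 (t - (q.2 : ℝ))} ∧
      FiniteDimensional ℂ S ∧
      Module.finrank ℂ S ≤
        ({q : Fin n × ℤ | ∃ t ∈ Set.Icc (0 : ℝ) 1, φ q.1 (t - (q.2 : ℝ)) ≠ 0}).ncard := by
  have hA := aux_fin n φ hsupp 0 1
  refine ⟨hA, ?_⟩
  let S : Submodule ℂ (ℝ → ℂ) :=
    { carrier := {f : ℝ → ℂ | (∀ x : ℝ, AnalyticAt ℝ f x) ∧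
          ∃ c : Fin n → ℤ → ℂ, ∀ t : ℝ,
            f t = ∑' q : Fin n × ℤ, c q.1 q.2 * φ q.1 (t - (q.2 : ℝ))}
      add_mem' := by
        rintro f g ⟨hf, c, hc⟩ ⟨hg, d, hd⟩
        refine ⟨fun x => (hf x).add (hg x), c + d, fun t => ?_⟩
        rw [Pi.add_apply, hc, hd, ← (aux_summable n φ hsupp c t).tsum_add
          (aux_summable n φ hsupp d t)]
        simp only [Pi.add_apply, add_mul]
      zero_mem' := ⟨fun x => analyticAt_const, 0, fun t => by simp⟩
      smul_mem' := by
        rintro a f ⟨hf, c, hc⟩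
        refine ⟨fun x => analyticAt_const.smul (hf x), a • c, fun t => ?_⟩
        rw [Pi.smul_apply, hc, smul_eq_mul, ← tsum_mul_left]
        simp only [Pi.smul_apply, smul_eq_mul, mul_assoc] }
  refine ⟨S, rfl, ?_⟩
  set A := {q : Fin n × ℤ | ∃ t ∈ Set.Icc (0 : ℝ) 1, φ q.1 (t - (q.2 : ℝ)) ≠ 0} with hAdef
  let v : Fin n × ℤ → (Set.Icc (0 : ℝ) 1 → ℂ) := fun q t => φ q.1 ((t : ℝ) - (q.2 : ℝ))
  let r : (ℝ → ℂ) →ₗ[ℂ] (Set.Icc (0 : ℝ) 1 → ℂ) := LinearMap.funLeft ℂ ℂ Subtype.val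
  let W : Submodule ℂ (Set.Icc (0 : ℝ) 1 → ℂ) := Submodule.span ℂ (v '' A)
  have hWfin : FiniteDimensional ℂ W := FiniteDimensional.span_of_finite ℂ (hA.image v)
  have hWle : Module.finrank ℂ W ≤ A.ncard := by
    have hf := (hA.image v)
    have := hf.fintype
    refine (finrank_span_le_card (R := ℂ) (v '' A)).trans ?_
    rw [← Set.ncard_eq_toFinset_card']
    exact Set.ncard_image_le hA
  have hmem : ∀ f : S, r f ∈ W := by
    rintro ⟨f, hf, c, hc⟩
    have : r f = ∑ q ∈ hA.toFinset, c q.1 q.2 • v q := by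
      ext t
      simp only [Finset.sum_apply, Pi.smul_apply, smul_eq_mul]
      change f t = _
      rw [hc]
      refine tsum_eq_sum ?_
      intro q hq
      by_contra h
      exact hq (hA.mem_toFinset.2 ⟨t, t.2, right_ne_zero_of_mul h⟩)
    change r f ∈ W
    rw [this]
    refine Submodule.sum_mem _ fun q hq => Submodule.smul_mem _ _ (Submodule.subset_span ?_)
    exact ⟨q, hA.mem_toFinset.1 hq, rfl⟩
  let L : S →ₗ[ℂ] W := (r.comp S.subtype).codRestrict W hmem
  have hL : Function.Injective L := by
    rw [injective_iff_map_eq_zero]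
    rintro ⟨f, hf⟩ h0
    have h1 : ∀ t ∈ Set.Icc (0 : ℝ) 1, f t = 0 := fun t ht =>
      congrFun (congrArg Subtype.val h0) ⟨t, ht⟩
    have h2 : AnalyticOnNhd ℝ f Set.univ := fun x _ => hf.1 x
    apply Subtype.ext
    refine h2.eq_of_eventuallyEq (z₀ := (1 / 2 : ℝ)) (fun x _ => analyticAt_const) ?_
    filter_upwards [Icc_mem_nhds (show (0 : ℝ) < 1 / 2 by norm_num)
      (show (1 / 2 : ℝ) < 1 by norm_num)] with t ht
    exact h1 t ht
  exact ⟨FiniteDimensional.of_injective L hL,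
    (LinearMap.finrank_le_finrank_of_injective hL).trans hWle⟩
end

section
/- Let φ : ℝ → ℂ be continuous, integrable and compactly supported, with linearly independent integer shifts. Let λ ∈ ℂ, d ∈ ℕ₀, let ω_0, …, ω_d : ℝ → ℂ be 1-periodic analytic functions with ω_d not identically zero, and let p_0, …, p_d be polynomials with deg(p_k) = k. If the function g(t) = e^{λt} Σ_{k=0}^d p_k(t)·ω_k(t) belongs to V_φ, then the sequences { φ̂^{(k)}(−iλ/(2π) + ℓ) : ℓ ∈ ℤ }, k = 0, …, d, decay exponentially: there exist C > 0 and q ∈ (0,1) such that |φ̂^{(k)}(−iλ/(2π) + ℓ)| ≤ C·q^{|ℓ|} for all ℓ ∈ ℤ and all k = 0, …, d. -/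
open MeasureTheory

/-- The Fourier transform of `φ`, analytically extended to `ℂ`:
`φ̂(z) = ∫_ℝ φ(x)·e^{−2πi x z} dx`. -/
noncomputable def fourierExt (φ : ℝ → ℂ) (z : ℂ) : ℂ :=
  ∫ x : ℝ, φ x * Complex.exp (-(2 * (Real.pi : ℂ) * Complex.I * (x : ℂ) * z))


open scoped Nat NNReal ENNReal in
lemma aux_local_bound {f : ℝ → ℂ} {x : ℝ} (hf : AnalyticAt ℝ f x) :
    ∃ ε > 0, ∃ C > (0:ℝ), ∃ A > (0:ℝ), ∀ y ∈ Metric.ball x ε, ∀ n : ℕ,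
      ‖iteratedDeriv n f y‖ ≤ C * A ^ n * n ! := by
  obtain ⟨p, R, hp⟩ := hf
  obtain ⟨ρ, hρ0, hρR⟩ := ENNReal.lt_iff_exists_nnreal_btwn.1 hp.r_pos
  have hρ0' : 0 < ρ := by exact_mod_cast hρ0
  set r : ℝ≥0 := ρ / 2 with hr
  have hr0 : 0 < r := by positivity
  have hrr : ((r : ℝ≥0∞) + r) < p.radius := by
    have : (r + r : ℝ≥0) = ρ := by rw [hr]; exact add_halves ρ
    rw [← ENNReal.coe_add, this]
    exact hρR.trans_le hp.r_le
  have hsum := p.changeOriginSeries_summable_aux₁ hrr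
  set T := ∑' s : Σ k l : ℕ, { s : Finset (Fin (k + l)) // s.card = l },
      ‖p (s.1 + s.2.1)‖₊ * r ^ s.2.1 * r ^ s.1 with hT
  refine ⟨r, by exact_mod_cast hr0, T + 1, by positivity, (r:ℝ)⁻¹, by positivity, ?_⟩
  intro y hy n
  have hy' : ‖y - x‖₊ < r := by
    rw [Metric.mem_ball, dist_eq_norm] at hy
    exact_mod_cast hy
  have hrR : (r : ℝ≥0∞) < R := by
    refine lt_of_le_of_lt ?_ hρR
    exact_mod_cast (half_le_self (zero_le : 0 ≤ ρ))
  have hyR : (‖y - x‖₊ : ℝ≥0∞) < R := lt_trans (by exact_mod_cast hy') hrR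
  have h1 := hp.changeOrigin hyR
  rw [add_sub_cancel] at h1
  have h2 := h1.factorial_smul (1:ℝ) n
  rw [← iteratedDeriv_eq_iteratedFDeriv] at h2
  have hb : ‖p.changeOrigin (y - x) n‖₊ * r ^ n ≤ T := by
    calc ‖p.changeOrigin (y - x) n‖₊ * r ^ n
        ≤ (∑' s : Σ l : ℕ, { s : Finset (Fin (n + l)) // s.card = l },
            ‖p (n + s.1)‖₊ * ‖y - x‖₊ ^ s.1) * r ^ n := by
          gcongr
          exact p.nnnorm_changeOrigin_le n (hyR.trans_le hp.r_le)
      _ ≤ (∑' s : Σ l : ℕ, { s : Finset (Fin (n + l)) // s.card = l },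
            ‖p (n + s.1)‖₊ * r ^ s.1) * r ^ n := by
          refine mul_le_mul' ?_ le_rfl
          have hs := p.changeOriginSeries_summable_aux₂ (hrR.trans_le hp.r_le) n
          have hs' := p.changeOriginSeries_summable_aux₂ (hyR.trans_le hp.r_le) n
          exact Summable.tsum_le_tsum (fun s => by gcongr) hs' hs
      _ = ∑' s : Σ l : ℕ, { s : Finset (Fin (n + l)) // s.card = l },
            ‖p (n + s.1)‖₊ * r ^ s.1 * r ^ n := by rw [NNReal.tsum_mul_right]
      _ ≤ T := by
          exact NNReal.tsum_comp_le_tsum_of_inj hsum (i := Sigma.mk n) sigma_mk_injective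
  have hb' : ‖p.changeOrigin (y - x) n‖ * (r:ℝ) ^ n ≤ T := by exact_mod_cast hb
  rw [← h2, nsmul_eq_mul, norm_mul]
  have h3 : ‖p.changeOrigin (y - x) n (fun _ => 1)‖ ≤ ‖p.changeOrigin (y - x) n‖ := by
    refine (ContinuousMultilinearMap.le_opNorm _ _).trans ?_
    simp
  have h4 : ‖p.changeOrigin (y - x) n‖ ≤ T * (r:ℝ)⁻¹ ^ n := by
    rw [inv_pow, ← div_eq_mul_inv, le_div_iff₀ (by positivity)]
    exact hb'
  rw [mul_comm]
  simp only [Complex.norm_natCast]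
  gcongr
  refine (h3.trans h4).trans ?_
  gcongr
  linarith

open scoped Nat in
lemma aux_global_bound {f : ℝ → ℂ} (hf : ∀ x, AnalyticAt ℝ f x) :
    ∃ C > (0:ℝ), ∃ A > (0:ℝ), ∀ y ∈ Set.Icc (0:ℝ) 1, ∀ n : ℕ,
      ‖iteratedDeriv n f y‖ ≤ C * A ^ n * n ! := by
  refine (isCompact_Icc (a := (0:ℝ)) (b := 1)).induction_on
    (p := fun s => ∃ C > (0:ℝ), ∃ A > (0:ℝ), ∀ y ∈ s, ∀ n : ℕ,
      ‖iteratedDeriv n f y‖ ≤ C * A ^ n * n !) ?_ ?_ ?_ ?_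
  · exact ⟨1, one_pos, 1, one_pos, by simp⟩
  · rintro s t hst ⟨C, hC, A, hA, h⟩
    exact ⟨C, hC, A, hA, fun y hy => h y (hst hy)⟩
  · rintro s t ⟨C, hC, A, hA, h⟩ ⟨C', hC', A', hA', h'⟩
    refine ⟨max C C', by positivity, max A A', by positivity, ?_⟩
    rintro y (hy | hy) n
    · refine (h y hy n).trans ?_
      gcongr
      · exact le_max_left _ _
      · exact le_max_left _ _
    · refine (h' y hy n).trans ?_
      gcongr
      · exact le_max_right _ _
      · exact le_max_right _ _
  · intro x _
    obtain ⟨ε, hε, C, hC, A, hA, h⟩ := aux_local_bound (hf x)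
    exact ⟨Metric.ball x ε, mem_nhdsWithin_of_mem_nhds (Metric.ball_mem_nhds x hε), C, hC, A, hA, h⟩

lemma aux_fourier_iter {f : ℝ → ℂ} (hf : ∀ x, AnalyticAt ℝ f x) (hper : ∀ t, f (t + 1) = f t)
    (m : ℤ) (hm : m ≠ 0) (n : ℕ) :
    ‖fourierCoeffOn (zero_lt_one' ℝ) f m‖ = (2 * Real.pi * |(m:ℝ)|)⁻¹ ^ n *
      ‖fourierCoeffOn (zero_lt_one' ℝ) (iteratedDeriv n f) m‖ := by
  have hcd : ContDiff ℝ ⊤ f := (contDiff_iff_contDiffAt.2 fun x => (hf x).contDiffAt)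
  induction n with
  | zero => simp
  | succ n ih =>
    rw [ih]
    have hd : ∀ x, HasDerivAt (iteratedDeriv n f) (iteratedDeriv (n+1) f x) x := by
      intro x
      rw [iteratedDeriv_succ]
      apply DifferentiableAt.hasDerivAt
      exact (hcd.differentiable_iteratedDeriv n (by exact_mod_cast WithTop.coe_lt_top _)) x
    have hc : Continuous (iteratedDeriv (n+1) f) := hcd.continuous_iteratedDeriv _ le_top
    have hp : iteratedDeriv n f 1 = iteratedDeriv n f 0 := by
      have h1 : (fun t => f (t + 1)) = f := funext hper
      have h2 := iteratedDeriv_comp_add_const n f 1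
      rw [h1] at h2
      have := congrFun h2 0
      simpa using this.symm
    rw [fourierCoeffOn_of_hasDerivAt (zero_lt_one' ℝ) hm (fun x _ => hd x)
      (hc.intervalIntegrable _ _), hp]
    simp only [sub_self, mul_zero, zero_sub, norm_mul, norm_neg, norm_div, norm_one]
    simp [abs_of_pos Real.pi_pos]
    ring

/-- Exponential decay of Fourier coefficients. -/
lemma aux_fourier_decay {f : ℝ → ℂ} (hf : ∀ x, AnalyticAt ℝ f x) (hper : ∀ t, f (t + 1) = f t) :
    ∃ C > (0:ℝ), ∃ q ∈ Set.Ioo (0:ℝ) 1, ∀ m : ℤ,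
      ‖fourierCoeffOn (zero_lt_one' ℝ) f m‖ ≤ C * q ^ m.natAbs := by
  obtain ⟨C, hC, A, hA, hb⟩ := aux_global_bound hf
  have hnb : ∀ (n : ℕ) (m : ℤ), ‖fourierCoeffOn (zero_lt_one' ℝ) (iteratedDeriv n f) m‖
      ≤ C * A ^ n * n.factorial := by
    intro n m
    rw [fourierCoeffOn_eq_integral]
    have := intervalIntegral.norm_integral_le_of_norm_le_const (a := (0:ℝ)) (b := 1)
      (f := fun x => fourier (-m) (x : AddCircle (1 - 0 : ℝ)) • iteratedDeriv n f x)
      (C := C * A ^ n * n.factorial) ?_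
    · simpa using this
    · intro x hx
      rw [Set.uIoc_of_le zero_le_one] at hx
      rw [norm_smul]
      have : ‖(fourier (-m) (x : AddCircle (1 - 0 : ℝ)))‖ = 1 := by
        rw [fourier_apply]; exact Circle.norm_coe _
      rw [this, one_mul]
      exact hb x ⟨hx.1.le, hx.2⟩ n
  set B : ℝ := A + 1 with hB
  set q : ℝ := (1/2 : ℝ) ^ (1 / B : ℝ) with hq
  have hB0 : 0 < B := by positivity
  refine ⟨2 * C, by positivity, q, ⟨by positivity, ?_⟩, ?_⟩
  · exact Real.rpow_lt_one (by norm_num) (by norm_num) (by positivity)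
  intro m
  by_cases hm : m = 0
  · have := hnb 0 m
    simp only [iteratedDeriv_zero] at this
    refine this.trans ?_
    simp [hm]; linarith
  set M : ℝ := |(m:ℝ)| with hM
  have hM1 : 1 ≤ M := by
    rw [hM]; exact_mod_cast Int.one_le_abs hm
  set n : ℕ := ⌊M / B⌋₊ with hn
  have hn1 : (n:ℝ) ≤ M / B := Nat.floor_le (by positivity)
  have hn2 : M / B < n + 1 := Nat.lt_floor_add_one _
  rw [aux_fourier_iter hf hper m hm n]
  have h2 : (2 * Real.pi * M)⁻¹ ^ n * (C * A ^ n * n.factorial) ≤ C * (1/2) ^ n := by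
    have hfac : (n.factorial : ℝ) ≤ (n:ℝ) ^ n := by exact_mod_cast Nat.factorial_le_pow n
    calc (2 * Real.pi * M)⁻¹ ^ n * (C * A ^ n * n.factorial)
        ≤ (2 * Real.pi * M)⁻¹ ^ n * (C * A ^ n * (n:ℝ)^n) := by gcongr
      _ = C * (A * n / (2 * Real.pi * M)) ^ n := by
          rw [div_pow, mul_pow, inv_pow]; ring
      _ ≤ C * (1/2) ^ n := by
          refine mul_le_mul_of_nonneg_left (pow_le_pow_left₀ (by positivity) ?_ n) hC.le
          rw [div_le_div_iff₀ (by positivity) (by positivity)]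
          have : A * n ≤ M := by
            have : (n:ℝ) * B ≤ M := by rwa [le_div_iff₀ hB0] at hn1
            have hn0 : (0:ℝ) ≤ n := by positivity
            nlinarith
          nlinarith [Real.pi_gt_three]
  refine (mul_le_mul_of_nonneg_left (hnb n m) (by positivity)).trans (h2.trans ?_)
  have hqm : q ^ m.natAbs = (1/2:ℝ) ^ (M / B) := by
    rw [hq, ← Real.rpow_natCast, ← Real.rpow_mul (by norm_num)]
    congr 1
    rw [Nat.cast_natAbs, Int.cast_abs, ← hM]; ring
  rw [hqm]
  have : (1/2:ℝ) ^ ((n:ℝ) + 1) ≤ (1/2:ℝ) ^ (M / B) :=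
    Real.rpow_le_rpow_of_exponent_ge (by norm_num) (by norm_num) hn2.le
  rw [Real.rpow_add (by norm_num), Real.rpow_natCast, Real.rpow_one] at this
  nlinarith

lemma aux_zero (m : ℕ) : ∀ (u : ℤ → ℂ), (fwdDiff (1:ℤ))^[m] u = 0 →
    (∀ i : ℕ, i < m → u i = 0) → u = 0 := by
  induction m with
  | zero => intro u h _; simpa using h
  | succ m ih =>
    intro u h h0
    have h1 : fwdDiff (1:ℤ) u = 0 := by
      apply ih
      · simpa [Function.iterate_succ_apply] using h
      · intro i hi
        have a1 := h0 i (by omega)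
        have a2 := h0 (i+1) (by omega)
        push_cast at a2
        simp [fwdDiff, a1, a2]
    have h2 : ∀ n : ℤ, u (n + 1) = u n := by
      intro n
      have := congrFun h1 n
      simpa [fwdDiff, sub_eq_zero] using this
    have h00 : u 0 = 0 := by simpa using h0 0 (by omega)
    funext n
    induction n with
    | zero => exact h00
    | succ i hi => rw [h2]; exact hi
    | pred i hi => rw [← h2]; simpa using hi

lemma aux_fwdDiff_poly {M : Type*} [AddCommMonoid M] (h : M) (c w : M → ℂ)
    (hc : ∀ x, c (x + h) = c x + 1) (hw : ∀ x, w (x + h) = w x) (F : ℂ → ℂ) (m : ℕ) :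
    (fwdDiff h)^[m] (fun x => F (c x) * w x) = fun x => ((fwdDiff (1:ℂ))^[m] F) (c x) * w x := by
  induction m generalizing F with
  | zero => rfl
  | succ m ih =>
    rw [Function.iterate_succ_apply, Function.iterate_succ_apply, ← ih]
    congr 1
    funext x
    simp [fwdDiff, hc, hw, sub_mul]

lemma aux_poly (d : ℕ) (b : ℤ → ℂ) (h : (fwdDiff (1:ℤ))^[d + 1] b = 0) :
    ∃ q : Polynomial ℂ, q.natDegree ≤ d ∧ ∀ n : ℤ, b n = q.eval (n : ℂ) := by
  set q := Lagrange.interpolate (Finset.range (d+1)) (fun i : ℕ => (i : ℂ)) (fun i => b i) with hq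
  have hinj : Set.InjOn (fun i : ℕ => (i : ℂ)) (Finset.range (d+1)) :=
    fun _ _ _ _ h => Nat.cast_injective (R := ℂ) h
  have hdeg : q.natDegree ≤ d := by
    have := Lagrange.degree_interpolate_lt (fun i : ℕ => b i) hinj
    rw [← hq, Finset.card_range] at this
    exact Polynomial.natDegree_le_of_degree_le (Order.le_of_lt_succ (by exact_mod_cast this))
  refine ⟨q, hdeg, ?_⟩
  have h0 : (fun n : ℤ => b n - q.eval (n : ℂ)) = 0 := by
    apply aux_zero (d+1)
    · have e1 : (fun n : ℤ => b n - q.eval (n : ℂ))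
        = b + (-1 : ℂ) • (fun n : ℤ => q.eval (n:ℂ) * 1) := by
        funext n; simp [sub_eq_add_neg]
      rw [e1, fwdDiff_iter_add, fwdDiff_iter_const_smul, h]
      rw [aux_fwdDiff_poly (1:ℤ) (fun n : ℤ => (n:ℂ)) (fun _ => 1) (by simp) (by simp)
        (fun z => q.eval z)]
      have := Polynomial.fwdDiff_iter_eq_zero_of_degree_lt (P := q) (n := d+1) (by omega)
      have e2 : (fwdDiff (1:ℂ))^[d+1] (fun z => q.eval z) = 0 := this
      rw [e2]; ext; simp
    · intro i hi
      have := Lagrange.eval_interpolate_at_node (fun i : ℕ => b i) hinj (Finset.mem_range.2 hi)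
      rw [← hq] at this
      simp [this]
  intro n
  have := congrFun h0 n
  simpa [sub_eq_zero] using this

/-- finite support of shifts -/
lemma aux_finsupp {χ : ℝ → ℂ} (hs : HasCompactSupport χ) (t : ℝ) (b : ℤ → ℂ) :
    (Function.support (fun ℓ : ℤ => b ℓ * χ (t - (ℓ:ℝ)))).Finite := by
  obtain ⟨R, hR⟩ := hs.isBounded.subset_closedBall 0
  refine (Set.finite_Icc (⌊t - R⌋) (⌈t + R⌉)).subset ?_
  intro ℓ hℓ
  have h1 : χ (t - ℓ) ≠ 0 := fun h => hℓ (by simp [h])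
  have h2 := hR (subset_tsupport _ h1)
  rw [mem_closedBall_zero_iff, Real.norm_eq_abs, abs_le] at h2
  constructor
  · have : (⌊t - R⌋ : ℝ) ≤ ℓ := (Int.floor_le _).trans (by linarith)
    exact_mod_cast this
  · have : (ℓ : ℝ) ≤ (⌈t + R⌉ : ℝ) := le_trans (by linarith) (Int.le_ceil _)
    exact_mod_cast this

lemma aux_summable_s10 {χ : ℝ → ℂ} (hs : HasCompactSupport χ) (t : ℝ) (b : ℤ → ℂ) :
    Summable (fun ℓ : ℤ => b ℓ * χ (t - (ℓ:ℝ))) :=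
  summable_of_hasFiniteSupport (aux_finsupp hs t b)

lemma aux_diff_series {χ : ℝ → ℂ} (hs : HasCompactSupport χ) (b : ℤ → ℂ) (m : ℕ) :
    (fwdDiff (1:ℝ))^[m] (fun t => ∑' ℓ : ℤ, b ℓ * χ (t - (ℓ:ℝ))) =
      fun t => ∑' ℓ : ℤ, ((fwdDiff (1:ℤ))^[m] b) ℓ * χ (t - (ℓ:ℝ)) := by
  induction m generalizing b with
  | zero => rfl
  | succ m ih =>
    rw [Function.iterate_succ_apply, Function.iterate_succ_apply, ← ih]
    congr 1
    funext t
    simp only [fwdDiff, sub_mul]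
    rw [Summable.tsum_sub (aux_summable_s10 hs t (fun ℓ => b (ℓ+1))) (aux_summable_s10 hs t b)]
    congr 1
    rw [← (Equiv.addRight (1:ℤ)).tsum_eq]
    refine tsum_congr fun ℓ => ?_
    simp

/-- Core algebraic lemma. -/
lemma aux_core {ψ : ℝ → ℂ} (hs : HasCompactSupport ψ)
    (hli : ∀ a : ℤ → ℂ, (∀ t : ℝ, ∑' ℓ : ℤ, a ℓ * ψ (t - (ℓ : ℝ)) = 0) → ∀ ℓ, a ℓ = 0)
    (d : ℕ) (ω : ℕ → ℝ → ℂ)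
    (hper : ∀ k ≤ d, ∀ t : ℝ, ω k (t + 1) = ω k t)
    (hana : ∀ k ≤ d, ∀ x : ℝ, AnalyticAt ℝ (ω k) x)
    (hωd : ∃ t : ℝ, ω d t ≠ 0)
    (p : ℕ → Polynomial ℂ) (hdeg : ∀ k ≤ d, (p k).degree = k)
    (b : ℤ → ℂ)
    (hg : ∀ t : ℝ, ∑ k ∈ Finset.range (d + 1), (p k).eval (t : ℂ) * ω k t
        = ∑' ℓ : ℤ, b ℓ * ψ (t - (ℓ : ℝ))) :
    ∀ j ≤ d, ∀ x : ℝ, AnalyticAt ℝ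
      (fun t : ℝ => ∑' ℓ : ℤ, (-((t - (ℓ:ℝ) : ℝ) : ℂ)) ^ j * ψ (t - (ℓ:ℝ))) x := by
  have hnd : ∀ k ≤ d, (p k).natDegree = k := fun k hk =>
    Polynomial.natDegree_eq_of_degree_eq_some (hdeg k hk)
  -- step 1
  have hb : (fwdDiff (1:ℤ))^[d+1] b = 0 := by
    funext ℓ
    refine hli _ ?_ ℓ
    intro t
    have h1 := congrFun (aux_diff_series hs b (d+1)) t
    rw [← h1]
    have h2 : (fun t : ℝ => ∑' ℓ : ℤ, b ℓ * ψ (t - (ℓ:ℝ))) =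
        ∑ k ∈ Finset.range (d + 1), fun t : ℝ => (p k).eval (t : ℂ) * ω k t := by
      funext t; rw [← hg t]; simp
    rw [h2, fwdDiff_iter_finsetSum]
    rw [Finset.sum_apply]
    refine Finset.sum_eq_zero fun k hk => ?_
    have hk' : k ≤ d := by have := Finset.mem_range.1 hk; omega
    rw [aux_fwdDiff_poly (1:ℝ) (fun x : ℝ => (x:ℂ)) (ω k) (by simp) (hper k hk')
        (fun z => (p k).eval z)]
    have e2 : (fwdDiff (1:ℂ))^[d+1] (fun z => (p k).eval z) = 0 :=
      Polynomial.fwdDiff_iter_eq_zero_of_degree_lt (P := p k) (n := d+1)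
        (by rw [hnd k hk']; omega)
    rw [e2]; simp
  obtain ⟨q, hqd, hq⟩ := aux_poly d b hb
  set P : ℕ → ℝ → ℂ := fun j t => ∑' ℓ : ℤ, (-((t - (ℓ:ℝ) : ℝ) : ℂ)) ^ j * ψ (t - (ℓ:ℝ)) with hP
  have hPper : ∀ j t, P j (t + 1) = P j t := by
    intro j t
    simp only [hP]
    rw [← (Equiv.addRight (1:ℤ)).tsum_eq]
    refine tsum_congr fun ℓ => ?_
    simp
  have hperN : ∀ k ≤ d, ∀ (n : ℕ) (t : ℝ), ω k (t + n) = ω k t := by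
    intro k hk n t
    induction n with
    | zero => simp
    | succ n ih => rw [Nat.cast_succ, ← add_assoc, hper k hk, ih]
  have hPperN : ∀ k (n : ℕ) (t : ℝ), P k (t + n) = P k t := by
    intro k n t
    induction n with
    | zero => simp
    | succ n ih => rw [Nat.cast_succ, ← add_assoc, hPper, ih]
  have hid : ∀ t : ℝ, ∑ k ∈ Finset.range (d + 1), (p k).eval (t : ℂ) * ω k t =
      ∑ j ∈ Finset.range (d + 1), (Polynomial.hasseDeriv j q).eval (t:ℂ) * P j t := by
    intro t
    rw [hg t]
    simp only [hP]
    simp_rw [← tsum_mul_left]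
    rw [← Summable.tsum_finsetSum]
    · refine tsum_congr fun ℓ => ?_
      rw [hq ℓ]
      have e1 : q.eval (ℓ:ℂ) = (Polynomial.taylor (t:ℂ) q).eval (-((t - (ℓ:ℝ) : ℝ) : ℂ)) := by
        rw [Polynomial.taylor_eval]; congr 1; push_cast; ring
      rw [e1, Polynomial.eval_eq_sum_range' (n := d+1)
        (by rw [Polynomial.natDegree_taylor]; omega), Finset.sum_mul]
      refine Finset.sum_congr rfl fun j _ => ?_
      rw [Polynomial.taylor_coeff]; ring
    · intro j _
      have := aux_summable_s10 hs t (fun ℓ => (Polynomial.hasseDeriv j q).eval (t:ℂ) *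
        (-((t - (ℓ:ℝ) : ℝ) : ℂ)) ^ j)
      simpa only [mul_assoc] using this
  have hpoly : ∀ t : ℝ, ∑ k ∈ Finset.range (d + 1), Polynomial.C (ω k t) * p k =
      ∑ j ∈ Finset.range (d + 1), Polynomial.C (P j t) * Polynomial.hasseDeriv j q := by
    intro t
    apply Polynomial.eq_of_infinite_eval_eq
    refine (Set.infinite_range_of_injective (f := fun n : ℕ => (((t + n : ℝ)) : ℂ)) ?_).mono ?_
    · intro m n h
      simpa using h
    · rintro _ ⟨n, rfl⟩
      have := hid (t + n)
      simp only [Set.mem_ofPred_eq, Polynomial.eval_finsetSum, Polynomial.eval_mul,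
        Polynomial.eval_C]
      simp only [hPperN] at this
      rw [Finset.sum_congr rfl (g := fun k => (p k).eval ((t + n : ℝ) : ℂ) * ω k t)
        (fun k hk => by rw [hperN k (by have := Finset.mem_range.1 hk; omega)])] at this
      simpa only [mul_comm] using this
  have hcoef : ∀ (t : ℝ) (m : ℕ), ∑ k ∈ Finset.range (d + 1), ω k t * (p k).coeff m =
      ∑ j ∈ Finset.range (d + 1), P j t * (((m + j).choose j : ℂ) * q.coeff (m + j)) := by
    intro t m
    have := congrArg (fun r => Polynomial.coeff r m) (hpoly t)
    simpa [Polynomial.finsetSum_coeff, Polynomial.coeff_C_mul, Polynomial.hasseDeriv_coeff]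
      using this
  have hqz : ∀ m, d < m → q.coeff m = 0 := fun m hm =>
    Polynomial.coeff_eq_zero_of_natDegree_lt (by omega)
  have hqd0 : q.coeff d ≠ 0 := by
    intro h0
    obtain ⟨t, ht⟩ := hωd
    have h1 := hcoef t d
    rw [Finset.sum_eq_single d] at h1
    · rw [Finset.sum_eq_zero] at h1
      · have : (p d).coeff d ≠ 0 := by
          have h := hnd d le_rfl
          have hp0 : p d ≠ 0 := by
            intro h'
            have := hdeg d le_rfl
            rw [h'] at this; simp at this
          have := Polynomial.leadingCoeff_ne_zero.2 hp0
          rwa [Polynomial.leadingCoeff, h] at this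
        exact mul_ne_zero ht this h1
      · intro j _
        rcases Nat.eq_zero_or_pos j with rfl | hj
        · simp [h0]
        · rw [hqz (d + j) (by omega)]; simp
    · intro k hk hkd
      have : k < d := by have := Finset.mem_range.1 hk; omega
      rw [Polynomial.coeff_eq_zero_of_natDegree_lt (by rw [hnd k this.le]; exact this)]
      simp
    · simp
  intro j
  induction j using Nat.strong_induction_on with
  | _ j ih =>
    intro hj x
    set c : ℂ := (d.choose j : ℂ) * q.coeff d with hc
    have hc0 : c ≠ 0 := mul_ne_zero (by exact_mod_cast (Nat.choose_pos hj).ne') hqd0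
    have hPj : P j = fun t => c⁻¹ * (∑ k ∈ Finset.range (d + 1), ω k t * (p k).coeff (d - j) -
        ∑ i ∈ Finset.range j, P i t * (((d - j + i).choose i : ℂ) * q.coeff (d - j + i))) := by
      funext t
      rw [hcoef t (d - j)]
      rw [← Finset.sum_range_add_sum_Ico _ (show j ≤ d + 1 by omega), add_sub_cancel_left]
      rw [Finset.sum_eq_single j]
      · rw [Nat.sub_add_cancel hj, ← hc]; field_simp
      · intro i hi hij
        have := Finset.mem_Ico.1 hi
        rw [hqz _ (by omega)]; simp
      · intro h; exact absurd (Finset.mem_Ico.2 ⟨le_rfl, by omega⟩) h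
    change AnalyticAt ℝ (P j) x
    rw [hPj]
    refine analyticAt_const.mul (AnalyticAt.sub ?_ ?_)
    · exact Finset.analyticAt_fun_sum _ fun k hk =>
        (hana k (by have := Finset.mem_range.1 hk; omega) x).mul analyticAt_const
    · exact Finset.analyticAt_fun_sum _ fun i hi =>
        (ih i (Finset.mem_range.1 hi) (by have := Finset.mem_range.1 hi; omega) x).mul
          analyticAt_const

lemma aux_periodize {χ : ℝ → ℂ} (hc : Continuous χ) (hs : HasCompactSupport χ) (m : ℤ) :
    fourierCoeffOn (zero_lt_one' ℝ) (fun t : ℝ => ∑' ℓ : ℤ, χ (t - (ℓ:ℝ))) m =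
      ∫ x : ℝ, χ x * Complex.exp (-(2 * (Real.pi : ℂ) * Complex.I * (x : ℂ) * m)) := by
  set G : ℝ → ℂ := fun x => χ x * Complex.exp (-(2 * (Real.pi : ℂ) * Complex.I * (x : ℂ) * m))
    with hG
  have hGc : Continuous G := by fun_prop
  have hGs : HasCompactSupport G := hs.mul_right
  have hGi : Integrable G := hGc.integrable_of_hasCompactSupport hGs
  obtain ⟨R, hR⟩ := hs.isBounded.subset_closedBall 0
  obtain ⟨N, hN⟩ := exists_nat_gt R
  set S : Finset ℤ := Finset.Icc (-(N:ℤ) - 1) (N + 1) with hS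
  have hz : ∀ x ∈ Set.Icc (0:ℝ) 1, ∀ n : ℤ, n ∉ S → χ (x + n) = 0 := by
    intro x hx n hn
    by_contra h
    apply hn
    have h2 := hR (subset_tsupport _ h)
    rw [mem_closedBall_zero_iff, Real.norm_eq_abs, abs_le] at h2
    obtain ⟨hx0, hx1⟩ := hx
    rw [hS, Finset.mem_Icc]
    constructor
    · have : (-(N:ℝ) - 1) ≤ n := by linarith
      exact_mod_cast this
    · have : (n:ℝ) ≤ N + 1 := by linarith
      exact_mod_cast this
  have hGz : ∀ x ∈ Set.Icc (0:ℝ) 1, ∀ n : ℤ, n ∉ S → G (x + n) = 0 := by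
    intro x hx n hn
    simp only [hG, hz x hx n hn, zero_mul]
  rw [← hGi.hasSum_intervalIntegral_comp_add_int.tsum_eq]
  rw [tsum_eq_sum (s := S)]
  · have hii : ∀ n ∈ S, IntervalIntegrable (fun x : ℝ => G (x + (n:ℝ))) volume 0 1 :=
      fun n _ => (hGc.comp (continuous_id.add continuous_const)).intervalIntegrable _ _
    rw [← intervalIntegral.integral_finsetSum hii]
    rw [fourierCoeffOn_eq_integral]
    simp only [sub_zero, div_one, one_smul]
    refine intervalIntegral.integral_congr fun x hx => ?_
    rw [Set.uIcc_of_le zero_le_one] at hx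
    have e1 : ∑' ℓ : ℤ, χ (x - (ℓ:ℝ)) = ∑ n ∈ S, χ (x + n) := by
      have e2 : ∑' n : ℤ, χ (x + n) = ∑ n ∈ S, χ (x + n) :=
        tsum_eq_sum (s := S) (fun n hn => hz x hx n hn)
      rw [← (Equiv.neg ℤ).tsum_eq, ← e2]
      refine tsum_congr fun n => ?_
      simp
    simp only [e1, smul_eq_mul]
    rw [Finset.mul_sum]
    refine Finset.sum_congr rfl fun n _ => ?_
    simp only [hG]
    rw [fourier_coe_apply, mul_comm]
    congr 1
    have h1 := Complex.exp_int_mul_two_pi_mul_I (-(n * m))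
    rw [← mul_one (Complex.exp (2 * _ * _ * _ * _ / _)), ← h1, ← Complex.exp_add]
    congr 1
    push_cast
    ring
  · intro n hn
    rw [intervalIntegral.integral_congr (g := fun _ => 0)]
    · simp
    · intro x hx
      rw [Set.uIcc_of_le zero_le_one] at hx
      exact hGz x hx n hn

lemma aux_deriv_step {χ : ℝ → ℂ} (hc : Continuous χ) (hs : HasCompactSupport χ) (z : ℂ) :
    HasDerivAt (fourierExt χ)
      (fourierExt (fun x => -(2 * (Real.pi : ℂ) * Complex.I * (x : ℂ)) * χ x) z) z := by
  unfold fourierExt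
  have hint : ∀ g : ℝ → ℂ, Continuous g → HasCompactSupport g → Integrable g :=
    fun g h1 h2 => h1.integrable_of_hasCompactSupport h2
  refine (hasDerivAt_integral_of_dominated_loc_of_deriv_le (s := Metric.ball z 1) (μ := volume)
    (F := fun (w : ℂ) (x : ℝ) => χ x *
      Complex.exp (-(2 * (Real.pi : ℂ) * Complex.I * (x : ℂ) * w)))
    (F' := fun (w : ℂ) (x : ℝ) => -(2 * (Real.pi : ℂ) * Complex.I * (x : ℂ)) * χ x *
      Complex.exp (-(2 * (Real.pi : ℂ) * Complex.I * (x : ℂ) * w)))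
    (bound := fun x : ℝ => ‖(2 * (Real.pi : ℂ) * Complex.I * (x : ℂ)) * χ x‖ *
      Real.exp (‖(2 * (Real.pi : ℂ) * Complex.I * (x : ℂ))‖ * (‖z‖ + 1)))
    (Metric.ball_mem_nhds z one_pos) ?_ ?_ ?_ ?_ ?_ ?_).2
  · refine Filter.Eventually.of_forall fun w => ?_
    exact (show Continuous _ by fun_prop).aestronglyMeasurable
  · exact hint _ (by fun_prop) hs.mul_right
  · exact (show Continuous _ by fun_prop).aestronglyMeasurable
  · refine Filter.Eventually.of_forall fun x w hw => ?_
    rw [norm_mul, neg_mul, norm_neg]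
    gcongr
    rw [Complex.norm_exp]
    gcongr
    refine (Complex.re_le_norm _).trans ?_
    rw [norm_neg, norm_mul]
    gcongr
    rw [Metric.mem_ball, dist_eq_norm] at hw
    have := norm_sub_norm_le w z
    linarith
  · refine Continuous.integrable_of_hasCompactSupport (by fun_prop) ?_
    exact (hs.mul_left.norm).mul_right
  · refine Filter.Eventually.of_forall fun x w _ => ?_
    have h1 : HasDerivAt (fun w : ℂ => -(2 * (Real.pi : ℂ) * Complex.I * (x : ℂ) * w))
        (-(2 * (Real.pi : ℂ) * Complex.I * (x : ℂ))) w := by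
      have h0 := (hasDerivAt_id w).const_mul (-(2 * (Real.pi : ℂ) * Complex.I * (x : ℂ)))
      rw [mul_one] at h0
      refine h0.congr_of_eventuallyEq (Filter.Eventually.of_forall fun v => ?_)
      simp
    refine (h1.cexp.const_mul (χ x)).congr_deriv ?_
    ring

lemma aux_iter_deriv {χ : ℝ → ℂ} (hc : Continuous χ) (hs : HasCompactSupport χ) (k : ℕ) :
    iteratedDeriv k (fourierExt χ) =
      fourierExt (fun x => (-(2 * (Real.pi : ℂ) * Complex.I * (x : ℂ))) ^ k * χ x) := by
  induction k with
  | zero => simp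
  | succ k ih =>
    rw [iteratedDeriv_succ, ih]
    funext z
    rw [(aux_deriv_step
      (χ := fun x : ℝ => (-(2 * (Real.pi : ℂ) * Complex.I * (x : ℂ))) ^ k * χ x)
      (by fun_prop) hs.mul_left z).deriv]
    congr 1
    funext x
    ring

lemma aux_uniform (d : ℕ) (F : ℕ → ℤ → ℝ)
    (h : ∀ k ≤ d, ∃ C > (0 : ℝ), ∃ q ∈ Set.Ioo (0 : ℝ) 1, ∀ ℓ : ℤ, F k ℓ ≤ C * q ^ ℓ.natAbs) :
    ∃ C > (0 : ℝ), ∃ q ∈ Set.Ioo (0 : ℝ) 1, ∀ k ≤ d, ∀ ℓ : ℤ, F k ℓ ≤ C * q ^ ℓ.natAbs := by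
  induction d with
  | zero =>
    obtain ⟨C, hC, q, hq, h⟩ := h 0 le_rfl
    refine ⟨C, hC, q, hq, fun k hk => ?_⟩
    obtain rfl : k = 0 := by omega
    exact h
  | succ d ih =>
    obtain ⟨C, hC, q, hq, h1⟩ := ih fun k hk => h k (by omega)
    obtain ⟨C', hC', q', hq', h2⟩ := h (d+1) le_rfl
    have hq0 := hq.1
    have hq0' := hq'.1
    refine ⟨max C C', by positivity, max q q', ⟨by positivity, max_lt hq.2 hq'.2⟩, ?_⟩
    intro k hk ℓ
    rcases Nat.lt_or_ge d k with hk' | hk'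
    · obtain rfl : k = d + 1 := by omega
      refine (h2 ℓ).trans ?_
      gcongr
      · exact le_max_right _ _
      · exact le_max_right _ _
    · refine (h1 k hk' ℓ).trans ?_
      gcongr
      · exact le_max_left _ _
      · exact le_max_left _ _

/-- If `φ` is continuous, integrable, compactly supported with linearly
independent integer shifts, and `g(t) = e^{λt} Σ_{k=0}^d p_k(t)·ω_k(t)` (with `ω_k` 1-periodic
analytic, `ω_d ≢ 0`, `deg p_k = k`) belongs to `V_φ`, then the sequences
`{φ̂^{(k)}(−iλ/(2π)+ℓ) : ℓ ∈ ℤ}`, `k = 0,…,d`, decay exponentially. -/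
theorem stmt_10 (φ : ℝ → ℂ) (hcont : Continuous φ) (hint : Integrable φ)
    (hsupp : HasCompactSupport φ)
    (hli : ∀ a : ℤ → ℂ, (∀ t : ℝ, ∑' ℓ : ℤ, a ℓ * φ (t - (ℓ : ℝ)) = 0) → ∀ ℓ, a ℓ = 0)
    (lam : ℂ) (d : ℕ) (ω : ℕ → ℝ → ℂ)
    (hper : ∀ k ≤ d, ∀ t : ℝ, ω k (t + 1) = ω k t)
    (hana : ∀ k ≤ d, ∀ x : ℝ, AnalyticAt ℝ (ω k) x)
    (hωd : ∃ t : ℝ, ω d t ≠ 0)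
    (p : ℕ → Polynomial ℂ) (hdeg : ∀ k ≤ d, (p k).degree = k)
    (a : ℤ → ℂ)
    (hg : ∀ t : ℝ,
      Complex.exp (lam * (t : ℂ)) * ∑ k ∈ Finset.range (d + 1), (p k).eval (t : ℂ) * ω k t
        = ∑' ℓ : ℤ, a ℓ * φ (t - (ℓ : ℝ))) :
    ∃ C > (0 : ℝ), ∃ q ∈ Set.Ioo (0 : ℝ) 1, ∀ k ≤ d, ∀ ℓ : ℤ,
      ‖iteratedDeriv k (fourierExt φ)
          (-(Complex.I * lam) / (2 * (Real.pi : ℂ)) + (ℓ : ℂ))‖ ≤ C * q ^ ℓ.natAbs := by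
  set ψ : ℝ → ℂ := fun x => Complex.exp (-(lam * (x:ℂ))) * φ x with hψ
  have hψc : Continuous ψ := by fun_prop
  have hψs : HasCompactSupport ψ := hsupp.mul_left
  have key : ∀ (c : ℤ → ℂ) (t : ℝ), ∑' ℓ : ℤ, c ℓ * ψ (t - (ℓ:ℝ)) =
      Complex.exp (-(lam * (t:ℂ))) *
        ∑' ℓ : ℤ, (c ℓ * Complex.exp (lam * (ℓ:ℂ))) * φ (t - (ℓ:ℝ)) := by
    intro c t
    rw [← tsum_mul_left]
    refine tsum_congr fun ℓ => ?_
    have : Complex.exp (-(lam * ((t - (ℓ:ℝ) : ℝ) : ℂ))) =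
        Complex.exp (-(lam * (t:ℂ))) * Complex.exp (lam * (ℓ:ℂ)) := by
      rw [← Complex.exp_add]; congr 1; push_cast; ring
    simp only [hψ, this]
    ring
  have hliψ : ∀ c : ℤ → ℂ, (∀ t : ℝ, ∑' ℓ : ℤ, c ℓ * ψ (t - (ℓ : ℝ)) = 0) → ∀ ℓ, c ℓ = 0 := by
    intro c hcz ℓ
    have := hli (fun ℓ => c ℓ * Complex.exp (lam * (ℓ:ℂ))) (fun t => by
      have h := hcz t
      rw [key] at h
      exact (mul_eq_zero.1 h).resolve_left (Complex.exp_ne_zero _)) ℓ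
    exact (mul_eq_zero.1 this).resolve_right (Complex.exp_ne_zero _)
  have hana' := aux_core hψs hliψ d ω hper hana hωd p hdeg
    (fun ℓ => a ℓ * Complex.exp (-(lam * (ℓ:ℂ)))) (by
      intro t
      rw [key]
      have : ∀ ℓ : ℤ, a ℓ * Complex.exp (-(lam * (ℓ:ℂ))) * Complex.exp (lam * (ℓ:ℂ)) = a ℓ := by
        intro ℓ
        rw [mul_assoc, ← Complex.exp_add]; simp
      simp only [this]
      rw [← hg t, ← mul_assoc, ← Complex.exp_add]; simp)
  refine aux_uniform d (fun k ℓ => ‖iteratedDeriv k (fourierExt φ)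
          (-(Complex.I * lam) / (2 * (Real.pi : ℂ)) + (ℓ : ℂ))‖) ?_
  intro k hk
  obtain ⟨C, hC, q, hq, hdec⟩ := aux_fourier_decay (hana' k hk) (by
    intro t
    rw [← (Equiv.addRight (1:ℤ)).tsum_eq]
    refine tsum_congr fun ℓ => ?_
    simp)
  refine ⟨(2 * Real.pi) ^ k * C, by positivity, q, hq, fun ℓ => ?_⟩
  have h1 := hdec ℓ
  rw [aux_periodize (χ := fun x : ℝ => (-(x:ℂ)) ^ k * ψ x) (by fun_prop) hψs.mul_left ℓ] at h1
  have hpi : (Real.pi : ℂ) ≠ 0 := by exact_mod_cast Real.pi_ne_zero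
  have h2 : iteratedDeriv k (fourierExt φ)
          (-(Complex.I * lam) / (2 * (Real.pi : ℂ)) + (ℓ : ℂ)) =
      (2 * (Real.pi:ℂ) * Complex.I) ^ k * ∫ x : ℝ, (-(x:ℂ)) ^ k * ψ x *
        Complex.exp (-(2 * (Real.pi : ℂ) * Complex.I * (x : ℂ) * ℓ)) := by
    rw [aux_iter_deriv hcont hsupp, fourierExt, ← integral_const_mul]
    refine integral_congr_ae (Filter.Eventually.of_forall fun x => ?_)
    simp only [hψ]
    have : Complex.exp (-(2 * (Real.pi : ℂ) * Complex.I * (x : ℂ) *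
        (-(Complex.I * lam) / (2 * (Real.pi : ℂ)) + (ℓ : ℂ)))) =
        Complex.exp (-(lam * (x:ℂ))) *
          Complex.exp (-(2 * (Real.pi : ℂ) * Complex.I * (x : ℂ) * ℓ)) := by
      rw [← Complex.exp_add]; congr 1
      field_simp
      ring_nf
      simp only [Complex.I_sq]
      ring
    rw [this, show (-(2 * (Real.pi : ℂ) * Complex.I * (x : ℂ))) =
      (2 * (Real.pi : ℂ) * Complex.I) * (-(x:ℂ)) by ring, mul_pow]
    ring
  simp only [h2]
  rw [norm_mul, norm_pow]
  have h3 : ‖2 * (Real.pi:ℂ) * Complex.I‖ = 2 * Real.pi := by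
    simp [abs_of_pos Real.pi_pos]
  rw [h3, mul_assoc ((2 * Real.pi) ^ k)]
  exact mul_le_mul_of_nonneg_left h1 (by positivity)
end

section
/- Let φ : ℝ → ℂ be continuous, integrable and compactly supported, let λ ∈ ℂ and k ∈ ℕ₀, and suppose the sequence ℓ ↦ φ̂^{(k)}(−iλ/(2π) + ℓ) is absolutely summable over ℤ. Then for every t ∈ ℝ (Poisson summation applied to x ↦ x^k·e^{−λx}·φ(x)): Σ_{ℓ∈ℤ} (t−ℓ)^k · e^{−λ(t−ℓ)} · φ(t−ℓ) = (−1/(2πi))^k · Σ_{ℓ∈ℤ} φ̂^{(k)}(−iλ/(2π) + ℓ) · e^{2πi ℓ t}. -/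
open MeasureTheory

theorem fourierExt_hasDerivAt (φ : ℝ → ℂ) (hcont : Continuous φ)
    (hsupp : HasCompactSupport φ) (z : ℂ) :
    HasDerivAt (fourierExt φ)
      (fourierExt (fun x : ℝ => -(2 * (Real.pi : ℂ) * Complex.I * (x : ℂ)) * φ x) z) z := by
  unfold fourierExt
  refine (hasDerivAt_integral_of_dominated_loc_of_deriv_le (μ := volume)
    (bound := fun x : ℝ => ‖φ x‖ * (2 * Real.pi * |x| * Real.exp (2 * Real.pi * |x| * (‖z‖ + 1))))
    (F := fun (w : ℂ) (x : ℝ) =>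
      φ x * Complex.exp (-(2 * (Real.pi : ℂ) * Complex.I * (x : ℂ) * w)))
    (F' := fun (w : ℂ) (x : ℝ) => -(2 * (Real.pi : ℂ) * Complex.I * (x : ℂ)) * φ x *
      Complex.exp (-(2 * (Real.pi : ℂ) * Complex.I * (x : ℂ) * w)))
    (Metric.ball_mem_nhds z one_pos) ?_ ?_ ?_ ?_ ?_ ?_).2
  · exact .of_forall fun w => by
      apply Continuous.aestronglyMeasurable
      fun_prop
  · apply Continuous.integrable_of_hasCompactSupport
    · fun_prop
    · exact hsupp.mul_right
  · apply Continuous.aestronglyMeasurable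
    fun_prop
  · refine ae_of_all _ fun x w hw => ?_
    have hw' : ‖w‖ ≤ ‖z‖ + 1 := by
      have h1 : ‖w - z‖ < 1 := by simpa [dist_eq_norm] using hw
      have h2 := norm_add_le z (w - z)
      have h3 : z + (w - z) = w := by ring
      rw [h3] at h2
      linarith
    have hn : ‖(2 * (Real.pi : ℂ) * Complex.I * (x : ℂ))‖ = 2 * Real.pi * |x| := by
      simp [abs_of_pos Real.pi_pos]
    have he : ‖Complex.exp (-(2 * (Real.pi : ℂ) * Complex.I * (x : ℂ) * w))‖ ≤
        Real.exp (2 * Real.pi * |x| * (‖z‖ + 1)) := by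
      refine (Complex.norm_exp_le_exp_norm _).trans ?_
      rw [norm_neg, norm_mul, hn]
      have := Real.pi_pos
      gcongr
    rw [norm_mul, norm_mul, norm_neg, hn, mul_comm (2 * Real.pi * |x|) ‖φ x‖, mul_assoc]
    have := Real.pi_pos
    gcongr
  · apply Continuous.integrable_of_hasCompactSupport
    · fun_prop
    · exact hsupp.norm.mul_right
  · refine ae_of_all _ fun x w _ => ?_
    have h1 : HasDerivAt (fun w : ℂ => -(2 * (Real.pi : ℂ) * Complex.I * (x : ℂ) * w))
        (-(2 * (Real.pi : ℂ) * Complex.I * (x : ℂ))) w := by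
      simpa using ((hasDerivAt_id w).const_mul (2 * (Real.pi : ℂ) * Complex.I * (x : ℂ))).fun_neg
    refine (h1.cexp.const_mul (φ x)).congr_deriv ?_
    ring

theorem fourierExt_iteratedDeriv (k : ℕ) : ∀ (φ : ℝ → ℂ), Continuous φ → HasCompactSupport φ →
    iteratedDeriv k (fourierExt φ) =
      fourierExt (fun x : ℝ => (-(2 * (Real.pi : ℂ) * Complex.I * (x : ℂ))) ^ k * φ x) := by
  induction k with
  | zero => intro φ _ _; simp
  | succ k ih =>
    intro φ hc hs
    have hd : deriv (fourierExt φ) =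
        fourierExt (fun x : ℝ => -(2 * (Real.pi : ℂ) * Complex.I * (x : ℂ)) * φ x) :=
      funext fun z => (fourierExt_hasDerivAt φ hc hs z).deriv
    rw [iteratedDeriv_succ', hd, ih (fun x : ℝ => -(2 * (Real.pi : ℂ) * Complex.I * (x : ℂ)) * φ x)
      (by fun_prop) hs.mul_left]
    congr 1
    funext x
    ring

/-- Poisson summation applied to `x ↦ x^k·e^{−λx}·φ(x)`: if the sequence
`ℓ ↦ φ̂^{(k)}(−iλ/(2π)+ℓ)` is absolutely summable, then for all `t ∈ ℝ`,
`Σ_ℓ (t−ℓ)^k·e^{−λ(t−ℓ)}·φ(t−ℓ) = (−1/(2πi))^k · Σ_ℓ φ̂^{(k)}(−iλ/(2π)+ℓ)·e^{2πiℓt}`. -/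
theorem stmt_12 (φ : ℝ → ℂ) (hcont : Continuous φ) (hint : Integrable φ)
    (hsupp : HasCompactSupport φ) (lam : ℂ) (k : ℕ)
    (hsum : Summable (fun ℓ : ℤ =>
      ‖iteratedDeriv k (fourierExt φ) (-(Complex.I * lam) / (2 * (Real.pi : ℂ)) + (ℓ : ℂ))‖)) :
    ∀ t : ℝ,
      ∑' ℓ : ℤ, ((t : ℂ) - (ℓ : ℂ)) ^ k * Complex.exp (-lam * ((t : ℂ) - (ℓ : ℂ))) *
          φ (t - (ℓ : ℝ))
        = (-1 / (2 * (Real.pi : ℂ) * Complex.I)) ^ k *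
          ∑' ℓ : ℤ, iteratedDeriv k (fourierExt φ)
              (-(Complex.I * lam) / (2 * (Real.pi : ℂ)) + (ℓ : ℂ)) *
            Complex.exp (2 * (Real.pi : ℂ) * Complex.I * (ℓ : ℂ) * (t : ℂ)) := by
  intro t
  set g : ℝ → ℂ := fun x => (x : ℂ) ^ k * Complex.exp (-lam * (x : ℂ)) * φ x with hg
  have hgc : Continuous g := by fun_prop
  have hgs : HasCompactSupport g := hsupp.mul_left
  have hpi : (Real.pi : ℂ) ≠ 0 := by exact_mod_cast Real.pi_ne_zero
  have hc : (2 * (Real.pi : ℂ) * Complex.I) ≠ 0 := by simp [hpi]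
  have key : ∀ ℓ : ℤ, iteratedDeriv k (fourierExt φ)
      (-(Complex.I * lam) / (2 * (Real.pi : ℂ)) + (ℓ : ℂ)) =
      (-(2 * (Real.pi : ℂ) * Complex.I)) ^ k * FourierTransform.fourier g (ℓ : ℝ) := by
    intro ℓ
    rw [fourierExt_iteratedDeriv k φ hcont hsupp, Real.fourier_real_eq_integral_exp_smul,
      ← integral_const_mul]
    unfold fourierExt
    congr 1
    funext x
    have he : Complex.exp (-(2 * (Real.pi : ℂ) * Complex.I * (x : ℂ) *
        (-(Complex.I * lam) / (2 * (Real.pi : ℂ)) + (ℓ : ℂ)))) =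
        Complex.exp (-lam * x) * Complex.exp (↑(-2 * Real.pi * x * (ℓ : ℝ)) * Complex.I) := by
      rw [← Complex.exp_add]
      congr 1
      push_cast
      field_simp
      linear_combination (lam * x) * Complex.I_sq
    simp only [hg, smul_eq_mul]
    rw [he, ← neg_mul, mul_pow]
    ring
  have hs2 : Summable (fun ℓ : ℤ => FourierTransform.fourier g (ℓ : ℝ)) := by
    have h1 := hsum.of_norm
    simp_rw [key] at h1
    exact (summable_mul_left_iff (pow_ne_zero k (neg_ne_zero.mpr hc))).1 h1
  have hO : g =O[Filter.cocompact ℝ] (fun x : ℝ => |x| ^ (-(2 : ℝ))) := by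
    have h0 : g =ᶠ[Filter.cocompact ℝ] (fun _ => (0 : ℂ)) := by
      filter_upwards [hgs.isCompact.compl_mem_cocompact] with x hx
      exact image_eq_zero_of_notMem_tsupport hx
    exact h0.trans_isBigO (Asymptotics.isBigO_zero _ _)
  have hP := Real.tsum_eq_tsum_fourier_of_rpow_decay_of_summable hgc one_lt_two hO hs2 t
  have hL : ∑' ℓ : ℤ, ((t : ℂ) - (ℓ : ℂ)) ^ k * Complex.exp (-lam * ((t : ℂ) - (ℓ : ℂ))) *
      φ (t - (ℓ : ℝ)) = ∑' n : ℤ, g (t + n) := by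
    rw [← (Equiv.neg ℤ).tsum_eq (fun n : ℤ => g (t + n))]
    refine tsum_congr fun ℓ => ?_
    simp [hg, sub_eq_add_neg]
  rw [hL, hP, ← tsum_mul_left]
  refine tsum_congr fun ℓ => ?_
  rw [key, fourier_coe_apply]
  have h1 : (-1 / (2 * (Real.pi : ℂ) * Complex.I)) ^ k *
      (-(2 * (Real.pi : ℂ) * Complex.I)) ^ k = 1 := by
    rw [← mul_pow, div_mul_eq_mul_div, neg_one_mul, neg_neg, div_self hc, one_pow]
  rw [← mul_assoc, ← mul_assoc, h1, one_mul]
  simp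
end
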